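/- Fix a ∈ ℤ and let b = max{a+4, |a|+1}. Assume θ ∈ Ḣ^b_⋄ and f ∈ Ḣ^{b−1}_⋄. Then the linear operator 𝒦 = 𝕀_θ*(𝕀_θ − ℒ) + (𝕀_θ − ℒ)*ℒ (so that 𝕀_θ*𝕀_θ = ℒ*ℒ + 𝒦) defines a compact operator from Ḣ^a_⋄ to Ḣ^{a+2}_⋄; in fact it maps Ḣ^a_⋄ continuously into Ḣ^{a+3}_⋄. -/

import Mathlib

open MeasureTheory Set
open scoped BigOperators

noncomputable section

namespace NS2D

/-- Nonzero Fourier frequencies of the 2D torus `Ω = 𝕋²`. -/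
def Freq : Type := {k : ℤ × ℤ // k ≠ 0}

/-- Squared Euclidean modulus `|k|²` of a frequency. -/
def knormSq (k : Freq) : ℝ := (k.1.1 : ℝ) ^ 2 + (k.1.2 : ℝ) ^ 2

/-- Eigenvalue `λ_k = 4π²|k|²` of the periodic Laplacian `−Δ`. -/
def lam (k : Freq) : ℝ := 4 * Real.pi ^ 2 * knormSq k

/-- A divergence-free mean-zero vector field `u ∈ Ḣ_⋄` (or, more generally, an
element of the scale `Ḣ^α_⋄`) on the torus is represented by its Fourier
coefficients `c k` along the orthonormal basis
`e_k(x) = |k|⁻¹ (k₂, −k₁) exp(2πi k·x)` of divergence-free fields. -/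
abbrev Coef : Type := Freq → ℂ

/-- Negation of a frequency. -/
def fneg (k : Freq) : Freq := ⟨-k.1, neg_ne_zero.mpr k.2⟩

/-- The conjugacy condition expressing that the coefficients `c` represent a
real-valued vector field (note `e_{−k} = − conj e_k`). -/
def IsReal (c : Coef) : Prop := ∀ k, c (fneg k) = - (starRingEnd ℂ) (c k)

/-- Squared homogeneous Sobolev norm `‖·‖²_{Ḣ^α} = Σ_k λ_k^α |c k|²`. -/
def hSq (α : ℝ) (c : Coef) : ℝ := ∑' k, lam k ^ α * ‖c k‖ ^ 2

/-- Homogeneous Sobolev norm `‖·‖_{Ḣ^α}`. -/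
def hN (α : ℝ) (c : Coef) : ℝ := Real.sqrt (hSq α c)

/-- Finiteness of the `Ḣ^α`-norm. -/
def FinH (α : ℝ) (c : Coef) : Prop := Summable fun k => lam k ^ α * ‖c k‖ ^ 2

/-- Membership in `Ḣ^α_⋄` (real-valued field with finite `Ḣ^α`-norm). -/
def MemH (α : ℝ) (c : Coef) : Prop := IsReal c ∧ FinH α c

/-- Membership in `Ḣ^∞_⋄ = C^∞(Ω)² ∩ Ḣ_⋄`: all Sobolev norms are finite. -/
def MemHinf (c : Coef) : Prop := ∀ α : ℝ, MemH α c

/-- Real `Ḣ^α` inner product `⟨·,·⟩_{Ḣ^α}` (for real-valued fields). -/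
def hInner (α : ℝ) (c d : Coef) : ℝ := ∑' k, lam k ^ α * (c k * (starRingEnd ℂ) (d k)).re

/-- The `L²` inner product. -/
def innerC (c d : Coef) : ℂ := ∑' k, c k * (starRingEnd ℂ) (d k)

/-- The unit vector `(k₂, −k₁)/|k|` spanning the divergence-free direction at
frequency `k`. -/
def evec (k : Freq) : ℝ × ℝ :=
  ((k.1.2 : ℝ) / Real.sqrt (knormSq k), -((k.1.1 : ℝ)) / Real.sqrt (knormSq k))

/-- Euclidean dot product on `ℝ²`. -/
def dotR (a b : ℝ × ℝ) : ℝ := a.1 * b.1 + a.2 * b.2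

/-- A frequency as a real vector. -/
def fvec (k : Freq) : ℝ × ℝ := ((k.1.1 : ℝ), (k.1.2 : ℝ))

/-- Fourier coefficients (along the basis `e_k`) of the Leray-projected
transport nonlinearity `B[u,v] = P[(u·∇)v]`:
`(B[u,v])^(k) · ē_k = 2πi Σ_{m+n=k, n≠0} c_m d_n (e_m·n)(e_n·e_k)`. -/
def Bc (c d : Coef) : Coef := fun k =>
  (((2 * Real.pi : ℝ) : ℂ) * Complex.I) *
    ∑' m : Freq,
      if h : k.1 - m.1 ≠ 0 then
        c m * d ⟨k.1 - m.1, h⟩ *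
          (((dotR (evec m) (fvec ⟨k.1 - m.1, h⟩) *
            dotR (evec ⟨k.1 - m.1, h⟩) (evec k) : ℝ)) : ℂ)
      else 0

/-- The Laplacian `Δ` acting on the scale: `(Δu)^(k) = −λ_k û(k)`. -/
def lapC (c : Coef) : Coef := fun k => -((lam k : ℝ) : ℂ) * c k

/-- Continuity of a trajectory `t ↦ u(t)`, `t ∈ [0,T]`, for the `Ḣ^α`-norm:
`u ∈ C([0,T], Ḣ^α_⋄)`. -/
def ContH (α : ℝ) (T : ℝ) (u : ℝ → Coef) : Prop :=
  ∀ t ∈ Icc (0:ℝ) T, ∀ ε > 0, ∃ δ > 0, ∀ s ∈ Icc (0:ℝ) T,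
    |s - t| < δ → hN α (u s - u t) < ε

/-- Membership `u ∈ L²([0,T], Ḣ^α_⋄)`. -/
def MemL2H (α : ℝ) (T : ℝ) (u : ℝ → Coef) : Prop :=
  (∀ t ∈ Ioc (0:ℝ) T, MemH α (u t)) ∧
    IntegrableOn (fun t => hSq α (u t)) (Ioc 0 T)

/-- `u` is a strong solution on `[0,T]` of the (Leray-projected) periodic 2D
Navier–Stokes equations `du/dt + νAu + B[u,u] = f`, `u(0) = θ`, posed in `Ḣ_⋄`:
the Fourier coefficients satisfy the corresponding system of ODEs on `(0,T]`,
the trajectory is continuous into `Ḣ¹_⋄` (in particular at `t = 0`), and lies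
in `L²([0,T], Ḣ²_⋄)`. -/
structure IsNSSol (ν : ℝ) (f : Coef) (T : ℝ) (θ : Coef) (u : ℝ → Coef) : Prop where
  init : u 0 = θ
  real : ∀ t ∈ Icc (0:ℝ) T, IsReal (u t)
  deriv : ∀ (k : Freq), ∀ t ∈ Ioc (0:ℝ) T,
    HasDerivAt (fun s => u s k)
      (f k - ((ν * lam k : ℝ) : ℂ) * u t k - Bc (u t) (u t) k) t
  contH1 : ContH 1 T u
  memL2H2 : MemL2H 2 T u

/-- `U` solves the linear parabolic equation
`dU/dt − νΔU + B[u₀, U] + B[U, u₁] = g`, `U(0) = ξ`, on `[0,T]`. -/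
structure IsLinPSol (ν : ℝ) (u₀ u₁ : ℝ → Coef) (g : ℝ → Coef) (T : ℝ) (ξ : Coef)
    (U : ℝ → Coef) : Prop where
  init : U 0 = ξ
  real : ∀ t ∈ Icc (0:ℝ) T, IsReal (U t)
  deriv : ∀ (k : Freq), ∀ t ∈ Ioc (0:ℝ) T,
    HasDerivAt (fun s => U s k)
      (g t k - ((ν * lam k : ℝ) : ℂ) * U t k - Bc (u₀ t) (U t) k - Bc (U t) (u₁ t) k) t

/-- `U = 𝕀_θ[ξ]` solves the linearisation of Navier–Stokes along the
trajectory `u₀`: `dU/dt − νΔU + B[u₀,U] + B[U,u₀] = 0`, `U(0) = ξ`. -/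
def IsLinSol (ν : ℝ) (u₀ : ℝ → Coef) (T : ℝ) (ξ : Coef) (U : ℝ → Coef) : Prop :=
  IsLinPSol ν u₀ u₀ (fun _ => 0) T ξ U

/-- The heat semigroup `S_t = e^{νtΔ}` on the scale `Ḣ^α_⋄`. -/
def heatS (ν t : ℝ) (c : Coef) : Coef := fun k =>
  ((Real.exp (-(ν * lam k * t)) : ℝ) : ℂ) * c k

/-- Duhamel representation of the solution of the periodic heat equation
`du/dt − νΔu = g`, `u(0) = h`. -/
def heatSol (ν : ℝ) (g : ℝ → Coef) (h : Coef) : ℝ → Coef := fun t k =>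
  ((Real.exp (-(ν * lam k * t)) : ℝ) : ℂ) *
    (h k + ∫ s in (0:ℝ)..t, ((Real.exp (ν * lam k * s) : ℝ) : ℂ) * g s k)

/-- Real-linearity of a map on the coefficient space. -/
def IsLinMap (Λ : Coef → Coef) : Prop :=
  (∀ c d, Λ (c + d) = Λ c + Λ d) ∧ ∀ (r : ℝ) (c : Coef), Λ (r • c) = r • Λ c

/-- `Λ` defines a compact (linear) operator `Ḣ^α_⋄ → Ḣ^β_⋄`: it is linear,
maps `Ḣ^α_⋄` into `Ḣ^β_⋄`, and the image of the `Ḣ^α`-unit ball is totally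
bounded for the `Ḣ^β`-norm. -/
def IsCompactOp (α β : ℝ) (Λ : Coef → Coef) : Prop :=
  IsLinMap Λ ∧ (∀ c, MemH α c → MemH β (Λ c)) ∧
    ∀ ε > 0, ∃ S : Finset Coef, ∀ c, MemH α c → hN α c ≤ 1 →
      ∃ s ∈ S, hN β (Λ c - s) < ε

/-- The index `a* = |a|+1` if `|a| ≤ 1`, `a* = |a|` if `|a| ≥ 2`. -/
def astar (a : ℤ) : ℤ := if |a| ≤ 1 then |a| + 1 else |a|

/-- `i`-th component of the unit vector `evec k`. -/
def evecC (i : Fin 2) (k : Freq) : ℝ := if i = 0 then (evec k).1 else (evec k).2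

/-- Fourier coefficients (over all of `ℤ²`) of the scalar component `u_i` of a
divergence-free field with coefficients `c`. -/
def compCoef (i : Fin 2) (c : Coef) : ℤ × ℤ → ℂ := fun n =>
  if h : n ≠ 0 then c ⟨n, h⟩ * ((evecC i ⟨n, h⟩ : ℝ) : ℂ) else 0

/-- Convolution: Fourier coefficients of a pointwise product of two scalar
functions. -/
def convC (F G : ℤ × ℤ → ℂ) : ℤ × ℤ → ℂ := fun n => ∑' m : ℤ × ℤ, F m * G (n - m)

/-- Squared homogeneous Sobolev norm of a scalar function given by its Fourier
coefficients over `ℤ²`. -/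
def hSqScalar (α : ℝ) (F : ℤ × ℤ → ℂ) : ℝ := ∑' k : Freq, lam k ^ α * ‖F k.1‖ ^ 2

/-- `‖u vᵀ‖²_{Ḣ^α} = Σ_{i,j=1}^2 ‖u_i v_j‖²_{Ḣ^α}`. -/
def hSqMat (α : ℝ) (c d : Coef) : ℝ :=
  ∑ i : Fin 2, ∑ j : Fin 2, hSqScalar α (convC (compCoef i c) (compCoef j d))

/-- The character `exp(2πi k·x)`. -/
def efun (k : Freq) (x : ℝ × ℝ) : ℂ :=
  Complex.exp ((((2 * Real.pi : ℝ)) : ℂ) * Complex.I *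
    ((k.1.1 : ℂ) * (x.1 : ℂ) + (k.1.2 : ℂ) * (x.2 : ℂ)))

/-- Pointwise evaluation of the `i`-th component of the field. -/
def evalComp (i : Fin 2) (c : Coef) (x : ℝ × ℝ) : ℂ :=
  ∑' k, c k * ((evecC i k : ℝ) : ℂ) * efun k x

/-- Supremum norm (`C⁰`-norm) of the field. -/
def c0N (c : Coef) : ℝ := ⨆ x : ℝ × ℝ, max ‖evalComp 0 c x‖ ‖evalComp 1 c x‖

/-- The partial derivative `∂_j` acting on divergence-free fields. -/
def pderiv (j : Fin 2) (c : Coef) : Coef := fun k =>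
  (((2 * Real.pi : ℝ) : ℂ) * Complex.I) *
    (if j = 0 then ((k.1.1 : ℤ) : ℂ) else ((k.1.2 : ℤ) : ℂ)) * c k

/-- `C¹`-norm of the field. -/
def c1N (c : Coef) : ℝ := c0N c + c0N (pderiv 0 c) + c0N (pderiv 1 c)

/-- Norm of the multiplier space `B^ℓ`: `C^ℓ(Ω)²` for `ℓ ≤ 1` and `Ḣ^ℓ` for
`ℓ ≥ 2`. -/
def bN (ℓ : ℕ) (c : Coef) : ℝ :=
  if ℓ = 0 then c0N c else if ℓ = 1 then c1N c else hN (ℓ : ℝ) c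

end NS2D

namespace NS2D

/-! ### Auxiliary inequalities in `ENNReal` -/

lemma ennreal_add_sq_le (x y : ENNReal) : (x + y) ^ 2 ≤ 4 * (x ^ 2 + y ^ 2) := by
  have key : ∀ x y : ENNReal, x ≤ y → (x + y) ^ 2 ≤ 4 * (x ^ 2 + y ^ 2) := by
    intro x y h
    calc (x + y) ^ 2 ≤ (y + y) ^ 2 := by gcongr
      _ = 4 * y ^ 2 := by ring
      _ ≤ _ := by gcongr; exact le_add_self
  rcases le_total x y with h | h
  · exact key x y h
  · rw [add_comm x y, add_comm (x ^ 2)]; exact key y x h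

lemma lintegral_cs {X : Type*} [MeasurableSpace X] (μ : Measure X) {f g : X → ENNReal}
    (hf : AEMeasurable f μ) (hg : AEMeasurable g μ) :
    (∫⁻ x, f x * g x ∂μ) ^ 2 ≤ (∫⁻ x, f x ^ 2 ∂μ) * ∫⁻ x, g x ^ 2 ∂μ := by
  have h := ENNReal.lintegral_mul_le_Lp_mul_Lq μ Real.HolderConjugate.two_two hf hg
  simp only [Pi.mul_apply, ENNReal.rpow_ofNat] at h
  calc (∫⁻ x, f x * g x ∂μ) ^ 2
      ≤ ((∫⁻ x, f x ^ 2 ∂μ) ^ (1 / 2 : ℝ) * (∫⁻ x, g x ^ 2 ∂μ) ^ (1 / 2 : ℝ)) ^ 2 := by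
        gcongr
    _ = _ := by
        rw [mul_pow, ← ENNReal.rpow_natCast, ← ENNReal.rpow_natCast, ← ENNReal.rpow_mul,
          ← ENNReal.rpow_mul]
        norm_num

lemma tsum_cs {X : Type*} (f g : X → ENNReal) :
    (∑' x, f x * g x) ^ 2 ≤ (∑' x, f x ^ 2) * ∑' x, g x ^ 2 := by
  let _ : MeasurableSpace X := ⊤
  have : MeasurableSingletonClass X := ⟨fun _ => trivial⟩
  have h := lintegral_cs (Measure.count : Measure X) (f := f) (g := g)
    (measurable_from_top).aemeasurable (measurable_from_top).aemeasurable
  simpa only [lintegral_count] using h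

/-- Young-type bound with one weighted factor. -/
lemma conv_bound_m (p C D : ℤ × ℤ → ENNReal) :
    ∑' k, (∑' m, p m * (C m * D (k - m))) ^ 2
      ≤ (∑' m, p m ^ 2) * ((∑' m, C m ^ 2) * ∑' m, D m ^ 2) := by
  calc ∑' k, (∑' m, p m * (C m * D (k - m))) ^ 2
      ≤ ∑' k, (∑' m, p m ^ 2) * ∑' m, (C m * D (k - m)) ^ 2 :=
        ENNReal.tsum_le_tsum fun k => tsum_cs _ _
    _ = (∑' m, p m ^ 2) * ∑' m, ∑' k, (C m * D (k - m)) ^ 2 := by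
        rw [ENNReal.tsum_mul_left, ENNReal.tsum_comm]
    _ = _ := by
        congr 1
        rw [← ENNReal.tsum_mul_right]
        refine tsum_congr fun m => ?_
        simp_rw [mul_pow]
        rw [ENNReal.tsum_mul_left]
        congr 1
        exact (Equiv.subRight m).tsum_eq (fun j => D j ^ 2)

lemma conv_comm' (C D : ℤ × ℤ → ENNReal) (k : ℤ × ℤ) :
    ∑' m, C m * D (k - m) = ∑' m, D m * C (k - m) := by
  rw [← (Equiv.subLeft k).tsum_eq]
  refine tsum_congr fun m => ?_
  simp [mul_comm]

lemma conv_bound_n (p C D : ℤ × ℤ → ENNReal) :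
    ∑' k, (∑' m, p (k - m) * (C m * D (k - m))) ^ 2
      ≤ (∑' m, p m ^ 2) * ((∑' m, C m ^ 2) * ∑' m, D m ^ 2) := by
  have h := conv_bound_m p D C
  rw [mul_comm (∑' m, D m ^ 2)] at h
  refine le_trans (le_of_eq ?_) h
  refine tsum_congr fun k => ?_
  congr 1
  have := conv_comm' C (fun j => p j * D j) k
  calc _ = ∑' m, C m * (p (k - m) * D (k - m)) := tsum_congr fun m => by ring
    _ = _ := by rw [this]; exact tsum_congr fun m => by ring

lemma conv_bound_k (p C D : ℤ × ℤ → ENNReal) :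
    ∑' k, (∑' m, p k * (C m * D (k - m))) ^ 2
      ≤ (∑' m, p m ^ 2) * ((∑' m, C m ^ 2) * ∑' m, D m ^ 2) := by
  rw [← ENNReal.tsum_mul_right]
  refine ENNReal.tsum_le_tsum fun k => ?_
  rw [ENNReal.tsum_mul_left, mul_pow]
  gcongr
  refine (tsum_cs _ _).trans (le_of_eq ?_)
  congr 1
  exact (Equiv.subLeft k).tsum_eq (fun j => D j ^ 2)

lemma conv_bound_all (K : ENNReal) (p C D : ℤ × ℤ → ENNReal) (F : ℤ × ℤ → ENNReal)
    (hF : ∀ k, F k ≤ ∑' m, K * ((p k + p m + p (k - m)) * (C m * D (k - m)))) :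
    ∑' k, F k ^ 2
      ≤ K ^ 2 * (36 * ((∑' m, p m ^ 2) * ((∑' m, C m ^ 2) * ∑' m, D m ^ 2))) := by
  set Z := (∑' m, p m ^ 2) * ((∑' m, C m ^ 2) * ∑' m, D m ^ 2)
  set X := fun k => ∑' m, p k * (C m * D (k - m))
  set Y := fun k => ∑' m, p m * (C m * D (k - m))
  set W := fun k => ∑' m, p (k - m) * (C m * D (k - m))
  have hX : ∑' k, X k ^ 2 ≤ Z := conv_bound_k p C D
  have hY : ∑' k, Y k ^ 2 ≤ Z := conv_bound_m p C D
  have hW : ∑' k, W k ^ 2 ≤ Z := conv_bound_n p C D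
  have h1 : ∀ k, F k ^ 2 ≤ K ^ 2 * (16 * X k ^ 2 + 16 * Y k ^ 2 + 4 * W k ^ 2) := by
    intro k
    have : F k ≤ K * (X k + Y k + W k) := by
      refine (hF k).trans (le_of_eq ?_)
      rw [ENNReal.tsum_mul_left, ← ENNReal.tsum_add, ← ENNReal.tsum_add]
      congr 1
      exact tsum_congr fun m => by ring
    calc F k ^ 2 ≤ (K * (X k + Y k + W k)) ^ 2 := by gcongr
      _ = K ^ 2 * (X k + Y k + W k) ^ 2 := by ring
      _ ≤ K ^ 2 * (4 * ((X k + Y k) ^ 2 + W k ^ 2)) := by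
          gcongr; exact ennreal_add_sq_le _ _
      _ ≤ K ^ 2 * (4 * (4 * (X k ^ 2 + Y k ^ 2) + W k ^ 2)) := by
          gcongr; exact ennreal_add_sq_le _ _
      _ = _ := by ring
  calc ∑' k, F k ^ 2 ≤ ∑' k, K ^ 2 * (16 * X k ^ 2 + 16 * Y k ^ 2 + 4 * W k ^ 2) :=
        ENNReal.tsum_le_tsum h1
    _ = K ^ 2 * (16 * ∑' k, X k ^ 2 + 16 * ∑' k, Y k ^ 2 + 4 * ∑' k, W k ^ 2) := by
        rw [ENNReal.tsum_mul_left, ENNReal.tsum_add, ENNReal.tsum_add, ENNReal.tsum_mul_left,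
          ENNReal.tsum_mul_left, ENNReal.tsum_mul_left]
    _ ≤ K ^ 2 * (16 * Z + 16 * Z + 4 * Z) := by gcongr
    _ = _ := by ring

/-! ### Weights and Sobolev norms in `ENNReal` -/

instance : Countable Freq := inferInstanceAs (Countable {k : ℤ × ℤ // k ≠ 0})

def lamZ (n : ℤ × ℤ) : ℝ := 4 * Real.pi ^ 2 * ((n.1 : ℝ) ^ 2 + (n.2 : ℝ) ^ 2)

lemma int_sq_ge_one {n : ℤ} (h : n ≠ 0) : (1 : ℝ) ≤ (n : ℝ) ^ 2 := by
  have : 1 ≤ n ^ 2 := by have := sq_pos_of_ne_zero h; omega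
  exact_mod_cast this

lemma normSq_ge_one {n : ℤ × ℤ} (h : n ≠ 0) : (1 : ℝ) ≤ (n.1 : ℝ) ^ 2 + (n.2 : ℝ) ^ 2 := by
  by_cases h1 : n.1 = 0
  · have h2 : n.2 ≠ 0 := fun h2 => h (Prod.ext h1 h2)
    nlinarith [int_sq_ge_one h2, sq_nonneg (n.1 : ℝ)]
  · nlinarith [int_sq_ge_one h1, sq_nonneg (n.2 : ℝ)]

lemma four_pi_sq : (1 : ℝ) ≤ 4 * Real.pi ^ 2 := by nlinarith [Real.pi_gt_three]

lemma normSq_le_lamZ (n : ℤ × ℤ) : (n.1 : ℝ) ^ 2 + (n.2 : ℝ) ^ 2 ≤ lamZ n := by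
  unfold lamZ
  nlinarith [four_pi_sq, sq_nonneg (n.1 : ℝ), sq_nonneg (n.2 : ℝ)]

lemma lamZ_ge_one {n : ℤ × ℤ} (h : n ≠ 0) : 1 ≤ lamZ n :=
  (normSq_ge_one h).trans (normSq_le_lamZ n)

lemma lamZ_pos {n : ℤ × ℤ} (h : n ≠ 0) : 0 < lamZ n := zero_lt_one.trans_le (lamZ_ge_one h)

lemma lam_eq (k : Freq) : lam k = lamZ k.1 := rfl

lemma lam_ge_one (k : Freq) : 1 ≤ lam k := lamZ_ge_one k.2

lemma lam_pos (k : Freq) : 0 < lam k := lamZ_pos k.2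

lemma lamZ_tri (m n : ℤ × ℤ) : lamZ (m + n) ≤ 4 * max (lamZ m) (lamZ n) := by
  have h : lamZ (m + n) ≤ 2 * (lamZ m + lamZ n) := by
    unfold lamZ
    have : 0 ≤ 4 * Real.pi ^ 2 := by positivity
    simp only [Prod.fst_add, Prod.snd_add, Int.cast_add]
    nlinarith [mul_nonneg this (sq_nonneg ((m.1 : ℝ) - n.1)),
      mul_nonneg this (sq_nonneg ((m.2 : ℝ) - n.2))]
  linarith [le_max_left (lamZ m) (lamZ n), le_max_right (lamZ m) (lamZ n)]

lemma lamZ_neg (n : ℤ × ℤ) : lamZ (-n) = lamZ n := by simp [lamZ]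

def wz (β : ℝ) (n : ℤ × ℤ) : ENNReal := if n = 0 then 0 else ENNReal.ofReal (lamZ n ^ β)

def ext (c : Coef) (n : ℤ × ℤ) : ENNReal := if h : n ≠ 0 then ‖c ⟨n, h⟩‖ₑ else 0

/-- Squared Sobolev norm valued in `[0,∞]`. -/
def eH (α : ℝ) (c : Coef) : ENNReal := ∑' k, ENNReal.ofReal (lam k ^ α) * ‖c k‖ₑ ^ 2

lemma wz_ne {β : ℝ} {n : ℤ × ℤ} (h : n ≠ 0) : wz β n = ENNReal.ofReal (lamZ n ^ β) := by
  simp [wz, h]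

lemma wz_add {n : ℤ × ℤ} (h : n ≠ 0) (β γ : ℝ) : wz (β + γ) n = wz β n * wz γ n := by
  rw [wz_ne h, wz_ne h, wz_ne h, Real.rpow_add (lamZ_pos h), ENNReal.ofReal_mul]
  exact (Real.rpow_pos_of_pos (lamZ_pos h) _).le

lemma ofReal_lam_add (k : Freq) (β γ : ℝ) : ENNReal.ofReal (lam k ^ (β + γ)) =
    ENNReal.ofReal (lam k ^ β) * ENNReal.ofReal (lam k ^ γ) := by
  have := wz_add k.2 β γ
  rw [wz_ne k.2, wz_ne k.2, wz_ne k.2] at this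
  exact this

lemma wz_zero {n : ℤ × ℤ} (h : n ≠ 0) : wz 0 n = 1 := by
  rw [wz_ne h]; simp

lemma tsum_freq (F : ℤ × ℤ → ENNReal) (h0 : F 0 = 0) : ∑' k : Freq, F k.1 = ∑' n, F n := by
  have hinj : Function.Injective (fun k : Freq => k.1) := Subtype.val_injective
  refine hinj.tsum_eq (f := F) ?_
  intro n hn
  exact ⟨⟨n, fun h => hn (by rw [h]; exact h0)⟩, rfl⟩

lemma eH_eq_sq (α : ℝ) (c : Coef) : eH α c = ∑' n, (wz (α / 2) n * ext c n) ^ 2 := by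
  rw [← tsum_freq _ (by simp [wz])]
  refine tsum_congr fun k => ?_
  have h := wz_add k.2 (α / 2) (α / 2)
  rw [add_halves, wz_ne k.2] at h
  have h2 : ext c k.1 = ‖c k‖ₑ := by
    unfold ext; rw [dif_pos k.2]; rfl
  rw [lam_eq, h, h2]
  ring

lemma weight_ineq {x μ y s r : ℝ} (hx : 0 < x) (hμ : 0 < μ) (hy : 0 < y)
    (h : x ≤ 4 * max μ y) (hs : 0 ≤ s) (hsr : s ≤ r) :
    x ^ s * μ ^ (-r) * y ^ (-s) ≤ 4 ^ s * (μ ^ (-r) + y ^ (-r)) := by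
  have hμr := Real.rpow_pos_of_pos hμ (-r)
  have hyr := Real.rpow_pos_of_pos hy (-r)
  have hys := Real.rpow_pos_of_pos hy (-s)
  have h4 : (0 : ℝ) < 4 ^ s := by positivity
  rcases le_total μ y with hl | hl
  · rw [max_eq_right hl] at h
    have h1 : x ^ s ≤ 4 ^ s * y ^ s := by
      rw [← Real.mul_rpow (by norm_num) hy.le]
      exact Real.rpow_le_rpow hx.le h hs
    have h2 : y ^ s * y ^ (-s) = 1 := by rw [← Real.rpow_add hy]; simp
    calc x ^ s * μ ^ (-r) * y ^ (-s) ≤ (4 ^ s * y ^ s) * μ ^ (-r) * y ^ (-s) := by gcongr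
      _ = 4 ^ s * μ ^ (-r) * (y ^ s * y ^ (-s)) := by ring
      _ = 4 ^ s * μ ^ (-r) := by rw [h2, mul_one]
      _ ≤ _ := by nlinarith
  · rw [max_eq_left hl] at h
    have h1 : x ^ s ≤ 4 ^ s * μ ^ s := by
      rw [← Real.mul_rpow (by norm_num) hμ.le]
      exact Real.rpow_le_rpow hx.le h hs
    have h2 : μ ^ s * μ ^ (-r) ≤ y ^ (s - r) := by
      rw [← Real.rpow_add hμ, ← sub_eq_add_neg]
      exact Real.rpow_le_rpow_of_nonpos hy hl (by linarith)
    have h3 : y ^ (s - r) * y ^ (-s) = y ^ (-r) := by rw [← Real.rpow_add hy]; ring_nf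
    calc x ^ s * μ ^ (-r) * y ^ (-s) ≤ (4 ^ s * μ ^ s) * μ ^ (-r) * y ^ (-s) := by gcongr
      _ = 4 ^ s * (μ ^ s * μ ^ (-r)) * y ^ (-s) := by ring
      _ ≤ 4 ^ s * y ^ (s - r) * y ^ (-s) := by gcongr
      _ = 4 ^ s * y ^ (-r) := by rw [mul_assoc, h3]
      _ ≤ _ := by nlinarith

lemma weight_ineq3 {x μ y α r : ℝ} (hx : 0 < x) (hμ : 0 < μ) (hy : 0 < y)
    (h : x ≤ 4 * max μ y) (h' : y ≤ 4 * max μ x) (hα : |α| ≤ r) :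
    x ^ α * μ ^ (-r) * y ^ (-α) ≤ 4 ^ |α| * (x ^ (-r) + μ ^ (-r) + y ^ (-r)) := by
  have h4 : (0 : ℝ) < 4 ^ |α| := by positivity
  have hxr := Real.rpow_pos_of_pos hx (-r)
  have hyr := Real.rpow_pos_of_pos hy (-r)
  rcases le_total 0 α with ha | ha
  · rw [abs_of_nonneg ha] at *
    refine (weight_ineq hx hμ hy h ha hα).trans ?_
    gcongr; linarith
  · rw [abs_of_nonpos ha] at *
    have := weight_ineq hy hμ hx h' (by linarith : 0 ≤ -α) hα
    rw [neg_neg] at this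
    calc _ = y ^ (-α) * μ ^ (-r) * x ^ α := by ring
      _ ≤ _ := this
      _ ≤ _ := mul_le_mul_of_nonneg_left (by linarith) h4.le

lemma summable_wz {r : ℝ} (hr : 3 / 2 ≤ r) : ∑' n, (wz (-r / 2) n) ^ 2 ≠ ⊤ := by
  have hS := EisensteinSeries.summable_one_div_norm_rpow (k := 3) (by norm_num)
  have hS' : Summable fun n : ℤ × ℤ => ‖(finTwoArrowEquiv ℤ).symm n‖ ^ (-3 : ℝ) :=
    (finTwoArrowEquiv ℤ).symm.summable_iff.mpr hS
  refine ne_top_of_le_ne_top hS'.tsum_ofReal_ne_top (ENNReal.tsum_le_tsum fun n => ?_)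
  by_cases h : n = 0
  · simp [wz, h]
  rw [sq, ← wz_add h, wz_ne h]
  apply ENNReal.ofReal_le_ofReal
  set z := (finTwoArrowEquiv ℤ).symm n with hz
  have hz0 : z ≠ 0 := by
    intro h0; apply h
    have := congrArg (finTwoArrowEquiv ℤ) h0
    rw [hz, Equiv.apply_symm_apply] at this
    rw [this]; rfl
  have hpos : 0 < ‖z‖ := norm_pos_iff.mpr hz0
  have hle : ‖z‖ ^ 2 ≤ lamZ n := by
    refine le_trans ?_ (normSq_le_lamZ n)
    have : ‖z‖ ≤ √((n.1 : ℝ) ^ 2 + (n.2 : ℝ) ^ 2) := by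
      refine (pi_norm_le_iff_of_nonneg (Real.sqrt_nonneg _)).mpr fun i => ?_
      apply Real.le_sqrt_of_sq_le
      fin_cases i
      · simp [hz, finTwoArrowEquiv, Int.norm_eq_abs]; positivity
      · simp [hz, finTwoArrowEquiv, Int.norm_eq_abs]; positivity
    calc ‖z‖ ^ 2 ≤ _ := pow_le_pow_left₀ hpos.le this 2
      _ = _ := Real.sq_sqrt (by positivity)
  calc lamZ n ^ (-r / 2 + -r / 2) ≤ lamZ n ^ (-(3 / 2) : ℝ) :=
        Real.rpow_le_rpow_of_exponent_le (lamZ_ge_one h) (by linarith)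
    _ ≤ (‖z‖ ^ 2) ^ (-(3 / 2) : ℝ) := Real.rpow_le_rpow_of_nonpos (by positivity) hle (by norm_num)
    _ = ‖z‖ ^ (-3 : ℝ) := by
        rw [← Real.rpow_natCast, ← Real.rpow_mul hpos.le]; norm_num

/-- Product estimate `H^r * H^α → H^α` for `|α| ≤ r`, `r > 1`. -/
lemma conv_sobolev {r α : ℝ} (hr : 3 / 2 ≤ r) (hα : |α| ≤ r) :
    ∃ K : ENNReal, K ≠ ⊤ ∧ ∀ c d : Coef,
      ∑' k, (wz (α / 2) k * ∑' m, ext c m * ext d (k - m)) ^ 2 ≤ K * (eH r c * eH α d) := by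
  refine ⟨(ENNReal.ofReal (4 ^ |α / 2|)) ^ 2 * (36 * ∑' n, (wz (-r / 2) n) ^ 2), ?_, ?_⟩
  · exact ENNReal.mul_ne_top (by finiteness) (ENNReal.mul_ne_top (by finiteness) (summable_wz hr))
  intro c d
  have h := conv_bound_all (ENNReal.ofReal (4 ^ |α / 2|)) (wz (-r / 2))
    (fun n => wz (r / 2) n * ext c n) (fun n => wz (α / 2) n * ext d n)
    (fun k => wz (α / 2) k * ∑' m, ext c m * ext d (k - m)) ?_
  · refine h.trans (le_of_eq ?_)
    rw [eH_eq_sq, eH_eq_sq]; ring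
  intro k
  rw [← ENNReal.tsum_mul_left]
  refine ENNReal.tsum_le_tsum fun m => ?_
  by_cases hk : k = 0
  · simp [hk, wz]
  by_cases hm : m = 0
  · simp [hm, ext]
  by_cases hn : k - m = 0
  · simp [hn, ext]
  have e1 : ext c m = wz (-r / 2) m * (wz (r / 2) m * ext c m) := by
    rw [← mul_assoc, ← wz_add hm]; ring_nf; rw [wz_zero hm, one_mul]
  have e2 : ext d (k - m) = wz (-(α / 2)) (k - m) * (wz (α / 2) (k - m) * ext d (k - m)) := by
    rw [← mul_assoc, ← wz_add hn, neg_add_cancel, wz_zero hn, one_mul]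
  have key : wz (α / 2) k * wz (-r / 2) m * wz (-(α / 2)) (k - m) ≤
      ENNReal.ofReal (4 ^ |α / 2|) * (wz (-r / 2) k + wz (-r / 2) m + wz (-r / 2) (k - m)) := by
    simp only [wz_ne hk, wz_ne hm, wz_ne hn]
    have p1 := lamZ_pos hk
    have p2 := lamZ_pos hm
    have p3 := lamZ_pos hn
    rw [← ENNReal.ofReal_mul (by positivity), ← ENNReal.ofReal_mul (by positivity),
      ← ENNReal.ofReal_add (by positivity) (by positivity),
      ← ENNReal.ofReal_add (by positivity) (by positivity), ← ENNReal.ofReal_mul (by positivity)]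
    apply ENNReal.ofReal_le_ofReal
    have t1 := lamZ_tri m (k - m)
    have t2 := lamZ_tri (-m) k
    rw [add_sub_cancel] at t1
    rw [lamZ_neg, neg_add_eq_sub] at t2
    have := weight_ineq3 (α := α / 2) (r := r / 2) p1 p2 p3 t1 t2
      (by rw [abs_div]; norm_num; linarith)
    rwa [← neg_div] at this
  calc wz (α / 2) k * (ext c m * ext d (k - m))
      = (wz (α / 2) k * wz (-r / 2) m * wz (-(α / 2)) (k - m)) *
        ((wz (r / 2) m * ext c m) * (wz (α / 2) (k - m) * ext d (k - m))) := by
        conv_lhs => rw [e1, e2]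
        ring
    _ ≤ (ENNReal.ofReal (4 ^ |α / 2|) * (wz (-r / 2) k + wz (-r / 2) m + wz (-r / 2) (k - m))) *
        ((wz (r / 2) m * ext c m) * (wz (α / 2) (k - m) * ext d (k - m))) := by gcongr
    _ = _ := by ring

lemma evec_dot_le (k m : Freq) : |dotR (evec m) (evec k)| ≤ 1 := by
  have hm : 0 < knormSq m := zero_lt_one.trans_le (normSq_ge_one m.2)
  have hk : 0 < knormSq k := zero_lt_one.trans_le (normSq_ge_one k.2)
  have sm := Real.sq_sqrt hm.le
  have sk := Real.sq_sqrt hk.le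
  have pm := Real.sqrt_pos.mpr hm
  have pk := Real.sqrt_pos.mpr hk
  have : dotR (evec m) (evec k) =
      ((m.1.2 : ℝ) * k.1.2 + m.1.1 * k.1.1) / (√(knormSq m) * √(knormSq k)) := by
    simp only [dotR, evec]; field_simp
  rw [this, abs_div, abs_of_pos (mul_pos pm pk), div_le_one (mul_pos pm pk)]
  apply abs_le_of_sq_le_sq _ (mul_pos pm pk).le
  rw [mul_pow, sm, sk]
  unfold knormSq
  nlinarith [sq_nonneg ((m.1.2 : ℝ) * k.1.1 - m.1.1 * k.1.2)]

lemma evec_fvec_le (k m n : Freq) (h : n.1 = k.1 - m.1) :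
    |dotR (evec m) (fvec n)| ≤ √(knormSq k) := by
  have hm : 0 < knormSq m := zero_lt_one.trans_le (normSq_ge_one m.2)
  have hk : 0 < knormSq k := zero_lt_one.trans_le (normSq_ge_one k.2)
  have sm := Real.sq_sqrt hm.le
  have sk := Real.sq_sqrt hk.le
  have pm := Real.sqrt_pos.mpr hm
  have pk := Real.sqrt_pos.mpr hk
  have : dotR (evec m) (fvec n) =
      ((m.1.2 : ℝ) * k.1.1 - m.1.1 * k.1.2) / √(knormSq m) := by
    simp only [dotR, evec, fvec, h, Prod.fst_sub, Prod.snd_sub, Int.cast_sub]; field_simp; ring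
  rw [this, abs_div, abs_of_pos pm, div_le_iff₀ pm]
  apply abs_le_of_sq_le_sq _ (mul_pos pk pm).le
  rw [mul_pow, sm, sk]
  unfold knormSq
  nlinarith [sq_nonneg ((m.1.2 : ℝ) * k.1.2 + m.1.1 * k.1.1)]

lemma Bc_enorm_le (c d : Coef) (k : Freq) :
    ‖Bc c d k‖ₑ ≤ wz (1 / 2) k.1 * ∑' m, ext c m * ext d (k.1 - m) := by
  unfold Bc
  rw [enorm_mul, ← tsum_freq (fun m => ext c m * ext d (k.1 - m)) (by simp [ext])]
  have hl : wz (1 / 2) k.1 = ENNReal.ofReal (2 * Real.pi) * ENNReal.ofReal (√(knormSq k)) := by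
    rw [wz_ne k.2, ← ENNReal.ofReal_mul (by positivity), ← Real.sqrt_eq_rpow, ← lam_eq]
    congr 1
    rw [lam, show 4 * Real.pi ^ 2 = (2 * Real.pi) ^ 2 by ring, Real.sqrt_mul (by positivity),
      Real.sqrt_sq (by positivity)]
  have h1 : ‖((2 * Real.pi : ℝ) : ℂ) * Complex.I‖ₑ = ENNReal.ofReal (2 * Real.pi) := by
    rw [← ofReal_norm, norm_mul, Complex.norm_real, Complex.norm_I, mul_one,
      Real.norm_of_nonneg (by positivity)]
  rw [h1, hl, mul_assoc]
  gcongr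
  rw [← ENNReal.tsum_mul_left]
  refine enorm_tsum_le_tsum_enorm.trans (ENNReal.tsum_le_tsum fun m => ?_)
  by_cases h : k.1 - m.1 ≠ 0
  · rw [dif_pos h, enorm_mul, enorm_mul]
    have e1 : ext c m.1 = ‖c m‖ₑ := by unfold ext; rw [dif_pos m.2]; rfl
    have e2 : ext d (k.1 - m.1) = ‖d ⟨k.1 - m.1, h⟩‖ₑ := by unfold ext; rw [dif_pos h]
    rw [e1, e2, mul_comm (ENNReal.ofReal _)]
    gcongr
    rw [← ofReal_norm, Complex.norm_real, Real.norm_eq_abs, abs_mul]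
    apply ENNReal.ofReal_le_ofReal
    calc _ ≤ √(knormSq k) * 1 := by
          gcongr
          · exact evec_fvec_le k m _ rfl
          · exact evec_dot_le _ _
      _ = _ := mul_one _
  · rw [dif_neg h]; simp

lemma eH_Bc_le_conv (α : ℝ) (c d : Coef) : eH (α - 1) (Bc c d) ≤
    ∑' k, (wz (α / 2) k * ∑' m, ext c m * ext d (k - m)) ^ 2 := by
  rw [← tsum_freq _ (by simp [wz])]
  refine ENNReal.tsum_le_tsum fun k => ?_
  have h1 : wz (α / 2) k.1 = wz ((α - 1) / 2) k.1 * wz (1 / 2) k.1 := by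
    rw [← wz_add k.2]; ring_nf
  have h2 : ENNReal.ofReal (lam k ^ (α - 1)) = wz ((α - 1) / 2) k.1 ^ 2 := by
    rw [sq, ← wz_add k.2, wz_ne k.2, add_halves]; rfl
  rw [h1, h2, mul_assoc, mul_pow]
  gcongr
  exact Bc_enorm_le c d k

/-- Bilinear estimates for `B`. -/
lemma Bc_sobolev {r α : ℝ} (hr : 3 / 2 ≤ r) (hα : |α| ≤ r) :
    ∃ K : ENNReal, K ≠ ⊤ ∧ ∀ c d : Coef,
      eH (α - 1) (Bc c d) ≤ K * (eH r c * eH α d) ∧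
      eH (α - 1) (Bc d c) ≤ K * (eH r c * eH α d) := by
  obtain ⟨K, hK, h⟩ := conv_sobolev hr hα
  refine ⟨K, hK, fun c d => ⟨(eH_Bc_le_conv α c d).trans (h c d), ?_⟩⟩
  refine (eH_Bc_le_conv α d c).trans (le_trans (le_of_eq ?_) (h c d))
  simp_rw [conv_comm' (ext d) (ext c)]

/-! ### Parabolic estimates, mode by mode -/

lemma enorm_sq_eq (z : ℂ) : ‖z‖ₑ ^ 2 = ENNReal.ofReal (‖z‖ ^ 2) := by
  rw [← ofReal_norm, ENNReal.ofReal_pow (norm_nonneg _)]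

lemma aem_g {κ T : ℝ} {y g : ℝ → ℂ} (hy : ContinuousOn y (Icc 0 T))
    (hd : ∀ t ∈ Ioc (0 : ℝ) T, HasDerivAt y (g t - (κ : ℂ) * y t) t) :
    AEMeasurable g (volume.restrict (Ioc 0 T)) := by
  have h1 : AEMeasurable y (volume.restrict (Ioc 0 T)) :=
    (hy.mono Ioc_subset_Icc_self).aemeasurable measurableSet_Ioc
  have h2 : AEMeasurable (fun t => deriv y t + (κ : ℂ) * y t) (volume.restrict (Ioc 0 T)) :=
    (aemeasurable_deriv y _).add (h1.const_mul _)
  refine h2.congr ?_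
  filter_upwards [ae_restrict_mem measurableSet_Ioc] with t ht
  rw [(hd t ht).deriv]; ring

def Et (μ t : ℝ) : ENNReal := ENNReal.ofReal (Real.exp (-(2 * μ * t)))

lemma Et_zero (t : ℝ) : Et 0 t = 1 := by simp [Et]

lemma Et_meas (μ : ℝ) : Measurable (Et μ) := by
  unfold Et; fun_prop

lemma mode_est {κ μ T : ℝ} (hκ : 0 < κ) (hμ : 0 ≤ μ) (hT : 0 ≤ T) {y g : ℝ → ℂ}
    (hy : ContinuousOn y (Icc 0 T))
    (hd : ∀ t ∈ Ioc (0 : ℝ) T, HasDerivAt y (g t - (κ : ℂ) * y t) t) :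
    Et μ T * ‖y T‖ₑ ^ 2 + ENNReal.ofReal (κ + 2 * μ) * ∫⁻ t in Ioc 0 T, Et μ t * ‖y t‖ₑ ^ 2 ≤
      ‖y 0‖ₑ ^ 2 + ENNReal.ofReal (1 / κ) * ∫⁻ t in Ioc 0 T, Et μ t * ‖g t‖ₑ ^ 2 := by
  have hEc : ∀ t, Et μ t = ENNReal.ofReal (Real.exp (-(2 * μ * t))) := fun t => rfl
  have hgm := aem_g hy hd
  have conv : ∀ z : ℝ → ℂ, (∫⁻ t in Ioc 0 T, Et μ t * ‖z t‖ₑ ^ 2) =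
      ∫⁻ t in Ioc 0 T, ENNReal.ofReal (Real.exp (-(2 * μ * t)) * ‖z t‖ ^ 2) := by
    intro z
    refine lintegral_congr fun t => ?_
    rw [hEc, enorm_sq_eq, ENNReal.ofReal_mul (Real.exp_pos _).le]
  by_cases hfin : ∫⁻ t in Ioc 0 T, Et μ t * ‖g t‖ₑ ^ 2 = ⊤
  · rw [hfin, ENNReal.mul_top (by simpa using hκ)]
    simp
  have hgi : IntegrableOn (fun t => Real.exp (-(2 * μ * t)) * ‖g t‖ ^ 2) (Ioc 0 T) := by
    refine ⟨?_, ?_⟩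
    · have : AEMeasurable (fun t => Real.exp (-(2 * μ * t)) * ‖g t‖ ^ 2)
          (volume.restrict (Ioc 0 T)) := by
        refine AEMeasurable.mul (by fun_prop) (hgm.norm.pow_const 2)
      exact this.aestronglyMeasurable
    · rw [hasFiniteIntegral_iff_ofReal (ae_of_all _ fun t => by positivity), ← conv]
      exact lt_top_iff_ne_top.mpr hfin
  have hyi : IntegrableOn (fun t => Real.exp (-(2 * μ * t)) * ‖y t‖ ^ 2) (Ioc 0 T) := by
    have : ContinuousOn (fun t => Real.exp (-(2 * μ * t)) * ‖y t‖ ^ 2) (Icc 0 T) := by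
      refine ContinuousOn.mul (by fun_prop) (hy.norm.pow 2)
    exact this.integrableOn_Icc.mono_set Ioc_subset_Icc_self
  have main := intervalIntegral.sub_le_integral_of_hasDeriv_right_of_le
    (g := fun t => Real.exp (-(2 * μ * t)) * ‖y t‖ ^ 2)
    (g' := fun t => (Real.exp (-(2 * μ * t)) * (-(2 * μ))) * ‖y t‖ ^ 2 +
      Real.exp (-(2 * μ * t)) * (2 * inner ℝ (y t) (g t - (κ : ℂ) * y t)))
    (φ := fun t => 1 / κ * (Real.exp (-(2 * μ * t)) * ‖g t‖ ^ 2) -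
      (κ + 2 * μ) * (Real.exp (-(2 * μ * t)) * ‖y t‖ ^ 2)) hT
    (ContinuousOn.mul (by fun_prop) (hy.norm.pow 2)) ?_ ?_ ?_
  · rw [intervalIntegral.integral_of_le hT, integral_sub (hgi.const_mul _) (hyi.const_mul _),
      integral_const_mul, integral_const_mul] at main
    have c1 := ofReal_integral_eq_lintegral_ofReal hgi (ae_of_all _ fun t => by positivity)
    have c2 := ofReal_integral_eq_lintegral_ofReal hyi (ae_of_all _ fun t => by positivity)
    rw [conv, conv, ← c1, ← c2, hEc, enorm_sq_eq, enorm_sq_eq,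
      ← ENNReal.ofReal_mul (by positivity), ← ENNReal.ofReal_mul (by positivity),
      ← ENNReal.ofReal_mul (by positivity), ← ENNReal.ofReal_add, ← ENNReal.ofReal_add]
    · apply ENNReal.ofReal_le_ofReal
      simp only [mul_zero, neg_zero, Real.exp_zero, one_mul] at main
      linarith
    · positivity
    · have := integral_nonneg_of_ae (μ := volume.restrict (Ioc 0 T))
        (f := fun t => Real.exp (-(2 * μ * t)) * ‖g t‖ ^ 2) (ae_of_all _ fun t => by positivity)
      positivity
    · positivity
    · have := integral_nonneg_of_ae (μ := volume.restrict (Ioc 0 T))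
        (f := fun t => Real.exp (-(2 * μ * t)) * ‖y t‖ ^ 2) (ae_of_all _ fun t => by positivity)
      positivity
  · intro t ht
    apply HasDerivAt.hasDerivWithinAt
    have h1 : HasDerivAt (fun t => Real.exp (-(2 * μ * t)))
        (Real.exp (-(2 * μ * t)) * (-(2 * μ))) t := by
      have := ((hasDerivAt_id t).const_mul (2 * μ)).neg.exp
      simpa using this
    exact h1.mul (hd t ⟨ht.1, ht.2.le⟩).norm_sq
  · rw [integrableOn_Icc_iff_integrableOn_Ioc]
    exact (hgi.const_mul _).sub (hyi.const_mul _)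
  · intro t ht
    have hE := Real.exp_pos (-(2 * μ * t))
    have h1 : inner ℝ (y t) (g t - (κ : ℂ) * y t) = inner ℝ (y t) (g t) - κ * ‖y t‖ ^ 2 := by
      rw [inner_sub_right, ← Complex.real_smul, inner_smul_right, real_inner_self_eq_norm_sq]
    have h2 : inner ℝ (y t) (g t) ≤ ‖y t‖ * ‖g t‖ := real_inner_le_norm _ _
    have h3 : 2 * (‖y t‖ * ‖g t‖) ≤ 1 / κ * ‖g t‖ ^ 2 + κ * ‖y t‖ ^ 2 := by
      have : 0 ≤ 1 / κ * (‖g t‖ - κ * ‖y t‖) ^ 2 := by positivity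
      have e : 1 / κ * (‖g t‖ - κ * ‖y t‖) ^ 2 =
        1 / κ * ‖g t‖ ^ 2 + κ * ‖y t‖ ^ 2 - 2 * (‖y t‖ * ‖g t‖) := by field_simp; ring
      linarith
    rw [h1]
    have h4 : 2 * (inner ℝ (y t) (g t) - κ * ‖y t‖ ^ 2) ≤
      1 / κ * ‖g t‖ ^ 2 - κ * ‖y t‖ ^ 2 := by linarith
    have := mul_le_mul_of_nonneg_left h4 hE.le
    linarith

/-- Trajectories solving `U' = G - ν λ U` mode by mode. -/
structure Par (ν T : ℝ) (U G : ℝ → Coef) : Prop where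
  cont : ∀ k, ContinuousOn (fun t => U t k) (Icc 0 T)
  der : ∀ k, ∀ t ∈ Ioc (0 : ℝ) T,
    HasDerivAt (fun s => U s k) (G t k - ((ν * lam k : ℝ) : ℂ) * U t k) t

lemma aem_U {T : ℝ} {U : ℝ → Coef} (h : ∀ k, ContinuousOn (fun t => U t k) (Icc 0 T)) (k : Freq) :
    AEMeasurable (fun t => U t k) (volume.restrict (Ioc 0 T)) :=
  ((h k).mono Ioc_subset_Icc_self).aemeasurable measurableSet_Ioc

lemma aem_eH {T : ℝ} {U : ℝ → Coef}
    (h : ∀ k, AEMeasurable (fun t => U t k) (volume.restrict (Ioc 0 T))) (α : ℝ) :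
    AEMeasurable (fun t => eH α (U t)) (volume.restrict (Ioc 0 T)) := by
  unfold eH
  exact AEMeasurable.tsum fun k => ((h k).enorm.pow_const 2).const_mul _

lemma lint_eH {T : ℝ} {U : ℝ → Coef}
    (h : ∀ k, AEMeasurable (fun t => U t k) (volume.restrict (Ioc 0 T))) (α μ : ℝ) :
    ∫⁻ t in Ioc 0 T, Et μ t * eH α (U t) =
      ∑' k, ENNReal.ofReal (lam k ^ α) * ∫⁻ t in Ioc 0 T, Et μ t * ‖U t k‖ₑ ^ 2 := by
  unfold eH
  simp_rw [← ENNReal.tsum_mul_left]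
  rw [lintegral_tsum]
  · refine tsum_congr fun k => ?_
    rw [← lintegral_const_mul' _ _ ENNReal.ofReal_ne_top]
    refine lintegral_congr fun t => ?_
    ring
  · intro k
    exact (Et_meas μ).aemeasurable.mul (((h k).enorm.pow_const 2).const_mul _)

lemma Par.aemG {ν T : ℝ} {U G : ℝ → Coef} (h : Par ν T U G) (k : Freq) :
    AEMeasurable (fun t => G t k) (volume.restrict (Ioc 0 T)) :=
  aem_g (h.cont k) (h.der k)

lemma Par.mono {ν T t : ℝ} {U G : ℝ → Coef} (h : Par ν T U G) (ht : t ≤ T) : Par ν t U G :=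
  ⟨fun k => (h.cont k).mono (Icc_subset_Icc_right ht),
    fun k s hs => h.der k s ⟨hs.1, hs.2.trans ht⟩⟩

lemma lam_inv (ν : ℝ) (hν : 0 < ν) (k : Freq) (α : ℝ) :
    ENNReal.ofReal (lam k ^ α) * ENNReal.ofReal (1 / (ν * lam k)) =
      ENNReal.ofReal (1 / ν) * ENNReal.ofReal (lam k ^ (α - 1)) := by
  have := lam_pos k
  rw [← ENNReal.ofReal_mul (by positivity), ← ENNReal.ofReal_mul (by positivity)]
  congr 1
  rw [Real.rpow_sub_one this.ne']
  field_simp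

lemma lam_mul (ν : ℝ) (hν : 0 < ν) (k : Freq) (α : ℝ) :
    ENNReal.ofReal (lam k ^ α) * ENNReal.ofReal (ν * lam k) =
      ENNReal.ofReal ν * ENNReal.ofReal (lam k ^ (α + 1)) := by
  have := lam_pos k
  rw [← ENNReal.ofReal_mul (by positivity), ← ENNReal.ofReal_mul (by positivity)]
  congr 1
  rw [Real.rpow_add_one this.ne']
  ring

/-- The basic parabolic estimate in the Sobolev scale, with exponential time weight. -/
lemma Par.est {ν T : ℝ} {U G : ℝ → Coef} (h : Par ν T U G) (hν : 0 < ν) (hT : 0 ≤ T)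
    {μ : ℝ} (hμ : 0 ≤ μ) (α : ℝ) :
    Et μ T * eH α (U T) + (ENNReal.ofReal ν * (∫⁻ t in Ioc 0 T, Et μ t * eH (α + 1) (U t)) +
      ENNReal.ofReal (2 * μ) * ∫⁻ t in Ioc 0 T, Et μ t * eH α (U t)) ≤
    eH α (U 0) + ENNReal.ofReal (1 / ν) * ∫⁻ t in Ioc 0 T, Et μ t * eH (α - 1) (G t) := by
  rw [lint_eH (aem_U h.cont), lint_eH (aem_U h.cont), lint_eH h.aemG]
  simp only [eH]
  simp_rw [← ENNReal.tsum_mul_left]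
  rw [← ENNReal.tsum_add, ← ENNReal.tsum_add, ← ENNReal.tsum_add]
  refine ENNReal.tsum_le_tsum fun k => ?_
  have hk := lam_pos k
  have m := mode_est (mul_pos hν hk) hμ hT (h.cont k) (h.der k)
  have m' := mul_le_mul_right m (ENNReal.ofReal (lam k ^ α))
  rw [ENNReal.ofReal_add (by positivity) (by positivity)] at m'
  calc _ = ENNReal.ofReal (lam k ^ α) * (Et μ T * ‖U T k‖ₑ ^ 2) +
        (ENNReal.ofReal (lam k ^ α) * ENNReal.ofReal (ν * lam k) *
          (∫⁻ t in Ioc 0 T, Et μ t * ‖U t k‖ₑ ^ 2) +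
        ENNReal.ofReal (lam k ^ α) * ENNReal.ofReal (2 * μ) *
          ∫⁻ t in Ioc 0 T, Et μ t * ‖U t k‖ₑ ^ 2) := by
        rw [lam_mul ν hν]; ring
    _ = _ := by ring
    _ ≤ _ := m'
    _ = ENNReal.ofReal (lam k ^ α) * ‖U 0 k‖ₑ ^ 2 +
        ENNReal.ofReal (lam k ^ α) * ENNReal.ofReal (1 / (ν * lam k)) *
          ∫⁻ t in Ioc 0 T, Et μ t * ‖G t k‖ₑ ^ 2 := by ring
    _ = _ := by rw [lam_inv ν hν]; ring

lemma Par.est_int {ν T : ℝ} {U G : ℝ → Coef} (h : Par ν T U G) (hν : 0 < ν) (hT : 0 ≤ T)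
    (α : ℝ) :
    ENNReal.ofReal ν * (∫⁻ t in Ioc 0 T, eH (α + 1) (U t)) ≤
    eH α (U 0) + ENNReal.ofReal (1 / ν) * ∫⁻ t in Ioc 0 T, eH (α - 1) (G t) := by
  have := h.est hν hT le_rfl α
  simp only [Et_zero, one_mul] at this
  exact le_trans (le_trans le_self_add le_add_self) this

lemma Par.est_sup {ν T : ℝ} {U G : ℝ → Coef} (h : Par ν T U G) (hν : 0 < ν)
    (α : ℝ) {t : ℝ} (ht : t ∈ Icc 0 T) :
    eH α (U t) ≤
    eH α (U 0) + ENNReal.ofReal (1 / ν) * ∫⁻ s in Ioc 0 T, eH (α - 1) (G s) := by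
  have := (h.mono ht.2).est hν ht.1 le_rfl α
  simp only [Et_zero, one_mul] at this
  refine (le_trans le_self_add this).trans ?_
  gcongr
  exact ht.2

/-! ### Regularity of the Navier–Stokes trajectory -/

lemma eH_mono {α β : ℝ} (h : α ≤ β) (c : Coef) : eH α c ≤ eH β c := by
  refine ENNReal.tsum_le_tsum fun k => ?_
  gcongr
  exact lam_ge_one k

lemma eH_term (α : ℝ) (c : Coef) (k : Freq) :
    ENNReal.ofReal (lam k ^ α) * ‖c k‖ₑ ^ 2 = ENNReal.ofReal (lam k ^ α * ‖c k‖ ^ 2) := by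
  have := lam_pos k
  rw [enorm_sq_eq, ENNReal.ofReal_mul (by positivity)]

lemma term_nonneg (α : ℝ) (c : Coef) (k : Freq) : 0 ≤ lam k ^ α * ‖c k‖ ^ 2 := by
  have := lam_pos k
  positivity

lemma hSq_nonneg (α : ℝ) (c : Coef) : 0 ≤ hSq α c := tsum_nonneg (term_nonneg α c)

lemma FinH.eH_eq {α : ℝ} {c : Coef} (h : FinH α c) : eH α c = ENNReal.ofReal (hSq α c) := by
  unfold eH hSq
  rw [ENNReal.ofReal_tsum_of_nonneg (term_nonneg α c) h]
  exact tsum_congr fun k => eH_term α c k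

lemma finH_iff {α : ℝ} {c : Coef} : FinH α c ↔ eH α c ≠ ⊤ := by
  constructor
  · intro h; rw [h.eH_eq]; exact ENNReal.ofReal_ne_top
  · intro h
    unfold eH at h
    simp_rw [eH_term] at h
    have := ENNReal.summable_toReal h
    refine this.congr fun k => ?_
    exact ENNReal.toReal_ofReal (term_nonneg α c k)

lemma hN_sq {α : ℝ} {c : Coef} (h : FinH α c) : ENNReal.ofReal (hN α c) ^ 2 = eH α c := by
  rw [h.eH_eq, hN, ← ENNReal.ofReal_pow (Real.sqrt_nonneg _), Real.sq_sqrt (hSq_nonneg _ _)]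

lemma eH_add_le (α : ℝ) (c d : Coef) : eH α (c + d) ≤ 4 * (eH α c + eH α d) := by
  unfold eH
  rw [← ENNReal.tsum_add, ← ENNReal.tsum_mul_left]
  refine ENNReal.tsum_le_tsum fun k => ?_
  calc ENNReal.ofReal (lam k ^ α) * ‖(c + d) k‖ₑ ^ 2
      ≤ ENNReal.ofReal (lam k ^ α) * (‖c k‖ₑ + ‖d k‖ₑ) ^ 2 := by
        gcongr; exact enorm_add_le _ _
    _ ≤ ENNReal.ofReal (lam k ^ α) * (4 * (‖c k‖ₑ ^ 2 + ‖d k‖ₑ ^ 2)) := by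
        gcongr; exact ennreal_add_sq_le _ _
    _ = _ := by ring

lemma eH_neg (α : ℝ) (c : Coef) : eH α (-c) = eH α c := by
  unfold eH
  refine tsum_congr fun k => ?_
  simp [Pi.neg_apply, enorm_neg]

lemma eH_sub_le (α : ℝ) (c d : Coef) : eH α (c - d) ≤ 4 * (eH α c + eH α d) := by
  rw [sub_eq_add_neg, ← eH_neg α d]; exact eH_add_le _ _ _

lemma FinH.sub {α : ℝ} {c d : Coef} (hc : FinH α c) (hd : FinH α d) : FinH α (c - d) := by
  rw [finH_iff] at *
  exact ne_top_of_le_ne_top (by finiteness) (eH_sub_le α c d)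

lemma FinH.anti {α β : ℝ} {c : Coef} (h : FinH β c) (hab : α ≤ β) : FinH α c := by
  rw [finH_iff] at *
  exact ne_top_of_le_ne_top h (eH_mono hab c)

lemma wz_half_sq (k : Freq) (α : ℝ) :
    ENNReal.ofReal (lam k ^ (α / 2)) ^ 2 = ENNReal.ofReal (lam k ^ α) := by
  rw [sq, ← ofReal_lam_add, add_halves]

lemma eH_interp (α : ℝ) (c : Coef) :
    eH (α + 1 / 2) c ^ 2 ≤ eH α c * eH (α + 1) c := by
  have h := tsum_cs (fun k => ENNReal.ofReal (lam k ^ (α / 2)) * ‖c k‖ₑ)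
    (fun k => ENNReal.ofReal (lam k ^ ((α + 1) / 2)) * ‖c k‖ₑ)
  simp_rw [mul_pow, wz_half_sq] at h
  refine le_trans (le_of_eq ?_) h
  congr 1
  refine tsum_congr fun k => ?_
  rw [show α + 1 / 2 = α / 2 + (α + 1) / 2 by ring, ofReal_lam_add]
  ring

lemma coord_le {α : ℝ} (hα : 0 ≤ α) {c : Coef} (h : FinH α c) (k : Freq) : ‖c k‖ ≤ hN α c := by
  apply Real.le_sqrt_of_sq_le
  calc ‖c k‖ ^ 2 ≤ lam k ^ α * ‖c k‖ ^ 2 := by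
        have := Real.one_le_rpow (lam_ge_one k) hα
        nlinarith [sq_nonneg ‖c k‖]
    _ ≤ _ := h.le_tsum k fun j _ => term_nonneg α c j

lemma ContH.coord {α T : ℝ} (hα : 0 ≤ α) {U : ℝ → Coef} (h : ContH α T U)
    (hf : ∀ t ∈ Icc (0 : ℝ) T, FinH α (U t)) (k : Freq) :
    ContinuousOn (fun t => U t k) (Icc 0 T) := by
  intro t ht
  rw [Metric.continuousWithinAt_iff]
  intro ε hε
  obtain ⟨δ, hδ, H⟩ := h t ht ε hε
  refine ⟨δ, hδ, fun {s} hs hst => ?_⟩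
  rw [dist_eq_norm]
  exact (coord_le hα ((hf s hs).sub (hf t ht)) k).trans_lt (H s hs (by rwa [Real.dist_eq] at hst))

lemma ContH.bdd {α T : ℝ} {U : ℝ → Coef} (h : ContH α T U)
    (hf : ∀ t ∈ Icc (0 : ℝ) T, FinH α (U t)) :
    ∃ M : ENNReal, M ≠ ⊤ ∧ ∀ t ∈ Icc (0 : ℝ) T, eH α (U t) ≤ M := by
  refine isCompact_Icc.induction_on (p := fun s => ∃ M : ENNReal, M ≠ ⊤ ∧ ∀ t ∈ s, eH α (U t) ≤ M)
    ⟨0, by simp, by simp⟩ ?_ ?_ ?_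
  · rintro s t hst ⟨M, hM, H⟩
    exact ⟨M, hM, fun x hx => H x (hst hx)⟩
  · rintro s t ⟨M, hM, H⟩ ⟨M', hM', H'⟩
    refine ⟨M + M', by finiteness, ?_⟩
    rintro x (hx | hx)
    · exact (H x hx).trans le_self_add
    · exact (H' x hx).trans le_add_self
  · intro t ht
    obtain ⟨δ, hδ, H⟩ := h t ht 1 one_pos
    refine ⟨Icc 0 T ∩ Metric.ball t δ,
      Filter.inter_mem self_mem_nhdsWithin (mem_nhdsWithin_of_mem_nhds (Metric.ball_mem_nhds t hδ)),
      4 * (1 + eH α (U t)), ?_, ?_⟩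
    · have := finH_iff.mp (hf t ht); finiteness
    rintro s ⟨hs, hst⟩
    have h1 : eH α (U s - U t) ≤ 1 := by
      rw [← hN_sq ((hf s hs).sub (hf t ht))]
      have := (H s hs (by simpa [Real.dist_eq] using hst)).le
      calc _ ≤ ENNReal.ofReal 1 ^ 2 := by gcongr
        _ = 1 := by simp
    calc eH α (U s) = eH α ((U s - U t) + U t) := by rw [sub_add_cancel]
      _ ≤ _ := eH_add_le _ _ _
      _ ≤ _ := by gcongr

lemma MemL2H.lint {α T : ℝ} {U : ℝ → Coef} (h : MemL2H α T U) :
    ∫⁻ t in Ioc 0 T, eH α (U t) ≠ ⊤ := by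
  have h2 := h.2.2
  rw [hasFiniteIntegral_iff_ofReal (ae_of_all _ fun t => hSq_nonneg _ _)] at h2
  refine ne_top_of_le_ne_top h2.ne (le_of_eq ?_)
  refine setLIntegral_congr_fun measurableSet_Ioc fun t ht => ?_
  exact (h.1 t ht).2.eH_eq

lemma lint_const_ne_top {T : ℝ} {x : ENNReal} (hx : x ≠ ⊤) : ∫⁻ _ in Ioc 0 T, x ≠ ⊤ := by
  rw [setLIntegral_const]
  exact ENNReal.mul_ne_top hx (by simp)

lemma ns_regular {ν T b : ℝ} (hν : 0 < ν) (hT : 0 < T) {f θ : Coef} {u : ℝ → Coef}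
    (hb : 1 ≤ b) (hθ : MemH b θ) (hf : MemH (b - 1) f) (hu : IsNSSol ν f T θ u) (n : ℕ) :
    1 + (n : ℝ) / 2 ≤ b → (∃ M : ENNReal, M ≠ ⊤ ∧ ∀ t ∈ Icc (0 : ℝ) T, eH (1 + (n : ℝ) / 2) (u t) ≤ M)
      ∧ ∫⁻ t in Ioc 0 T, eH (1 + (n : ℝ) / 2 + 1) (u t) ≠ ⊤ := by
  have hfin1 : ∀ t ∈ Icc (0 : ℝ) T, FinH 1 (u t) := by
    intro t ht
    rcases ht.1.eq_or_lt with h0 | h0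
    · rw [← h0, hu.init]; exact hθ.2.anti hb
    · exact (hu.memL2H2.1 t ⟨h0, ht.2⟩).2.anti (by norm_num)
  have hpar : Par ν T u (fun t => f - Bc (u t) (u t)) := by
    refine ⟨hu.contH1.coord zero_le_one hfin1, fun k t ht => ?_⟩
    convert hu.deriv k t ht using 1
    simp only [Pi.sub_apply]; ring
  induction n with
  | zero =>
    intro _
    simp only [Nat.cast_zero, zero_div, add_zero]
    refine ⟨hu.contH1.bdd hfin1, ?_⟩
    norm_num
    exact hu.memL2H2.lint
  | succ n ih =>
    intro hn
    push_cast at hn ⊢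
    have hn0 : (0 : ℝ) ≤ n := Nat.cast_nonneg n
    obtain ⟨⟨M, hM, HM⟩, HI⟩ := ih (by linarith)
    set α : ℝ := 1 + (n : ℝ) / 2 with hα
    have e : 1 + ((n : ℝ) + 1) / 2 = α + 1 / 2 := by rw [hα]; ring
    rw [e] at hn ⊢
    have hα1 : 1 ≤ α := by rw [hα]; linarith
    obtain ⟨K, hK, HB⟩ := Bc_sobolev (r := α + 1 / 2) (α := α + 1 / 2) (by linarith)
      (abs_of_nonneg (by linarith : 0 ≤ α + 1 / 2)).le
    have hfα : eH (α + 1 / 2 - 1) f ≠ ⊤ := finH_iff.mp (hf.2.anti (by linarith))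
    have hθα : eH (α + 1 / 2) (u 0) ≠ ⊤ := by
      rw [hu.init]; exact finH_iff.mp (hθ.2.anti hn)
    have hG : ∫⁻ t in Ioc 0 T, eH (α + 1 / 2 - 1) (f - Bc (u t) (u t)) ≠ ⊤ := by
      have h1 : ∀ t ∈ Ioc 0 T, eH (α + 1 / 2 - 1) (f - Bc (u t) (u t)) ≤
          4 * eH (α + 1 / 2 - 1) f + 4 * (K * M) * eH (α + 1) (u t) := by
        intro t ht
        calc _ ≤ _ := eH_sub_le _ _ _
          _ ≤ 4 * (eH (α + 1 / 2 - 1) f + K * (M * eH (α + 1) (u t))) := by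
              gcongr
              refine (HB (u t) (u t)).1.trans ?_
              refine mul_le_mul_right ?_ K
              rw [← sq]
              refine (eH_interp α (u t)).trans ?_
              gcongr
              exact HM t ⟨ht.1.le, ht.2⟩
          _ = _ := by ring
      refine ne_top_of_le_ne_top ?_ (setLIntegral_mono' measurableSet_Ioc h1)
      rw [lintegral_add_left measurable_const,
        lintegral_const_mul' (4 * (K * M)) _ (by finiteness)]
      exact ENNReal.add_ne_top.mpr ⟨lint_const_ne_top (by finiteness),
        ENNReal.mul_ne_top (by finiteness) HI⟩
    refine ⟨⟨_, ?_, fun t ht => hpar.est_sup hν (α + 1 / 2) ht⟩, ?_⟩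
    · finiteness
    · have := hpar.est_int hν hT.le (α + 1 / 2)
      intro htop
      rw [htop, ENNReal.mul_top (by simpa using hν)] at this
      exact absurd (top_le_iff.mp this) (by finiteness)

/-! ### The linearised equation -/

lemma ofReal_inv_mul {ν : ℝ} (hν : 0 < ν) {x y : ENNReal} (h : ENNReal.ofReal ν * x ≤ y) :
    x ≤ ENNReal.ofReal (1 / ν) * y := by
  calc x = ENNReal.ofReal (1 / ν) * (ENNReal.ofReal ν * x) := by
        rw [← mul_assoc, ← ENNReal.ofReal_mul (by positivity), one_div_mul_cancel hν.ne']
        simp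
    _ ≤ _ := by gcongr

/-- Right-hand side of the linearised equation. -/
def linG (u U : ℝ → Coef) (t : ℝ) : Coef := -Bc (u t) (U t) - Bc (U t) (u t)

lemma linG_bound {r α T : ℝ} (hr : 3 / 2 ≤ r) (hα : |α| ≤ r) {u : ℝ → Coef} {M : ENNReal}
    (hM : M ≠ ⊤) (HM : ∀ t ∈ Icc (0 : ℝ) T, eH r (u t) ≤ M) :
    ∃ Q : ENNReal, Q ≠ ⊤ ∧ ∀ U : ℝ → Coef, ∀ t ∈ Ioc (0 : ℝ) T,
      eH (α - 1) (linG u U t) ≤ Q * eH α (U t) := by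
  obtain ⟨K, hK, HB⟩ := Bc_sobolev hr hα
  refine ⟨8 * K * M, by finiteness, fun U t ht => ?_⟩
  have hb := HB (u t) (U t)
  have hm := HM t ⟨ht.1.le, ht.2⟩
  calc _ ≤ _ := eH_sub_le _ _ _
    _ ≤ 4 * (K * (M * eH α (U t)) + K * (M * eH α (U t))) := by
        rw [eH_neg]
        gcongr
        · refine hb.1.trans ?_; gcongr
        · refine hb.2.trans ?_; gcongr
    _ = _ := by ring

lemma lin_fin {r T ν : ℝ} (hν : 0 < ν) (hT : 0 < T) (hr : 3 / 2 ≤ r) {u : ℝ → Coef} {M : ENNReal}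
    (hM : M ≠ ⊤) (HM : ∀ t ∈ Icc (0 : ℝ) T, eH r (u t) ≤ M) {U : ℝ → Coef}
    (hU : Par ν T U (linG u U)) (h0 : ∀ α, eH α (U 0) ≠ ⊤)
    (h1 : ∫⁻ t in Ioc 0 T, eH 1 (U t) ≠ ⊤) (n : ℕ) :
    1 + (n : ℝ) ≤ r → ∫⁻ t in Ioc 0 T, eH (1 + (n : ℝ)) (U t) ≠ ⊤ := by
  induction n with
  | zero => intro _; simpa using h1
  | succ n ih =>
    intro hn
    push_cast at hn ⊢
    have hn0 : (0 : ℝ) ≤ n := Nat.cast_nonneg n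
    have H := ih (by linarith)
    obtain ⟨Q, hQ, HQ⟩ := linG_bound (α := 1 + (n : ℝ)) hr
      (by rw [abs_of_nonneg (by linarith)]; linarith) hM HM
    have hG : ∫⁻ t in Ioc 0 T, eH (1 + (n : ℝ) - 1) (linG u U t) ≠ ⊤ := by
      refine ne_top_of_le_ne_top ?_ (setLIntegral_mono' measurableSet_Ioc (HQ U))
      rw [lintegral_const_mul' _ _ hQ]
      exact ENNReal.mul_ne_top hQ H
    have := hU.est_int hν hT.le (1 + (n : ℝ))
    rw [← add_assoc]
    intro htop
    rw [htop, ENNReal.mul_top (by simpa using hν)] at this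
    have h00 := h0 (1 + (n : ℝ))
    exact absurd (top_le_iff.mp this) (by finiteness)

lemma Et_le_one {μ t : ℝ} (hμ : 0 ≤ μ) (ht : 0 ≤ t) : Et μ t ≤ 1 := by
  unfold Et
  rw [← ENNReal.ofReal_one]
  apply ENNReal.ofReal_le_ofReal
  rw [Real.exp_le_one_iff]
  have := mul_nonneg hμ ht
  linarith

lemma le_Et {μ t T : ℝ} (hμ : 0 ≤ μ) (ht : t ≤ T) :
    1 ≤ ENNReal.ofReal (Real.exp (2 * μ * T)) * Et μ t := by
  unfold Et
  rw [← ENNReal.ofReal_mul (Real.exp_pos _).le, ← Real.exp_add, ← ENNReal.ofReal_one]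
  apply ENNReal.ofReal_le_ofReal
  rw [Real.one_le_exp_iff]
  nlinarith [mul_nonneg hμ (sub_nonneg.mpr ht)]

lemma lin_est {r T ν α : ℝ} (hν : 0 < ν) (hT : 0 < T) (hr : 3 / 2 ≤ r) (hα : |α| ≤ r)
    {u : ℝ → Coef} {M : ENNReal}
    (hM : M ≠ ⊤) (HM : ∀ t ∈ Icc (0 : ℝ) T, eH r (u t) ≤ M) :
    ∃ C : ENNReal, C ≠ ⊤ ∧ ∀ U : ℝ → Coef, Par ν T U (linG u U) →
      ∫⁻ t in Ioc 0 T, eH α (U t) ≠ ⊤ →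
      ∫⁻ t in Ioc 0 T, eH (α + 1) (U t) ≤ C * eH α (U 0) := by
  obtain ⟨Q, hQ, HQ⟩ := linG_bound hr hα hM HM
  set P := ENNReal.ofReal (1 / ν) * Q with hP
  have hPt : P ≠ ⊤ := by finiteness
  set μ := P.toReal / 2 with hμ
  have hμ0 : 0 ≤ μ := by positivity
  have h2μ : ENNReal.ofReal (2 * μ) = P := by
    rw [hμ, mul_div_cancel₀ _ two_ne_zero, ENNReal.ofReal_toReal hPt]
  refine ⟨ENNReal.ofReal (Real.exp (2 * μ * T)) * ENNReal.ofReal (1 / ν), by finiteness, ?_⟩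
  intro U hU hfin
  have hest := hU.est hν hT.le hμ0 α
  set X := ∫⁻ t in Ioc 0 T, Et μ t * eH (α + 1) (U t)
  set Y := ∫⁻ t in Ioc 0 T, Et μ t * eH α (U t) with hY
  have hYfin : Y ≠ ⊤ := by
    refine ne_top_of_le_ne_top hfin (setLIntegral_mono' measurableSet_Ioc fun t ht => ?_)
    calc _ ≤ 1 * eH α (U t) := by gcongr; exact Et_le_one hμ0 ht.1.le
      _ = _ := one_mul _
  have hG : ∫⁻ t in Ioc 0 T, Et μ t * eH (α - 1) (linG u U t) ≤ Q * Y := by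
    rw [hY, ← lintegral_const_mul' _ _ hQ]
    refine setLIntegral_mono' measurableSet_Ioc fun t ht => ?_
    calc _ ≤ Et μ t * (Q * eH α (U t)) := by gcongr; exact HQ U t ht
      _ = _ := by ring
  have h1 : ENNReal.ofReal ν * X ≤ eH α (U 0) := by
    have : ENNReal.ofReal ν * X + P * Y ≤ eH α (U 0) + P * Y := by
      rw [h2μ] at hest
      refine (le_add_self.trans hest).trans ?_
      rw [hP, mul_assoc]
      gcongr
    exact (ENNReal.add_le_add_iff_right (ENNReal.mul_ne_top hPt hYfin)).mp this
  have h2 : X ≤ ENNReal.ofReal (1 / ν) * eH α (U 0) := ofReal_inv_mul hν h1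
  calc ∫⁻ t in Ioc 0 T, eH (α + 1) (U t)
      ≤ ∫⁻ t in Ioc 0 T, ENNReal.ofReal (Real.exp (2 * μ * T)) * (Et μ t * eH (α + 1) (U t)) := by
        refine setLIntegral_mono' measurableSet_Ioc fun t ht => ?_
        calc _ = 1 * eH (α + 1) (U t) := (one_mul _).symm
          _ ≤ ENNReal.ofReal (Real.exp (2 * μ * T)) * Et μ t * eH (α + 1) (U t) := by
              gcongr; exact le_Et hμ0 ht.2
          _ = _ := by ring
    _ = ENNReal.ofReal (Real.exp (2 * μ * T)) * X := lintegral_const_mul' _ _ (by finiteness)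
    _ ≤ ENNReal.ofReal (Real.exp (2 * μ * T)) * (ENNReal.ofReal (1 / ν) * eH α (U 0)) := by
        gcongr
    _ = _ := (mul_assoc _ _ _).symm

lemma heat_par (ν T : ℝ) (ξ : Coef) : Par ν T (fun t => heatS ν t ξ) (fun _ => 0) := by
  have hd : ∀ k t, HasDerivAt (fun s => heatS ν s ξ k)
      ((0 : Coef) k - ((ν * lam k : ℝ) : ℂ) * heatS ν t ξ k) t := by
    intro k t
    have h1 : HasDerivAt (fun t => Real.exp (-(ν * lam k * t)))
        (Real.exp (-(ν * lam k * t)) * (-(ν * lam k))) t := by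
      have := ((hasDerivAt_id t).const_mul (ν * lam k)).neg.exp
      simpa using this
    refine (h1.ofReal_comp.mul_const (ξ k)).congr_deriv ?_
    simp only [heatS, Pi.zero_apply]
    push_cast
    ring
  exact ⟨fun k t _ => (hd k t).continuousAt.continuousWithinAt, fun k t _ => hd k t⟩

lemma heatS_zero (ν : ℝ) (ξ : Coef) : heatS ν 0 ξ = ξ := by
  funext k; simp [heatS]

lemma eH_zero (α : ℝ) : eH α 0 = 0 := by simp [eH]

lemma heat_est {ν T : ℝ} (hν : 0 < ν) (hT : 0 < T) (α : ℝ) (ξ : Coef) :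
    ∫⁻ t in Ioc 0 T, eH (α + 1) (heatS ν t ξ) ≤ ENNReal.ofReal (1 / ν) * eH α ξ := by
  have h := (heat_par ν T ξ).est_int hν hT.le α
  simp only [eH_zero, lintegral_zero, mul_zero, add_zero, heatS_zero] at h
  exact ofReal_inv_mul hν h

lemma W_par {ν T : ℝ} {U G : ℝ → Coef} (ξ : Coef) (hU : Par ν T U G) :
    Par ν T (fun t => U t - heatS ν t ξ) G := by
  have hh := heat_par ν T ξ
  refine ⟨fun k => (hU.cont k).sub (hh.cont k), fun k t ht => ?_⟩
  refine ((hU.der k t ht).sub (hh.der k t ht)).congr_deriv ?_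
  simp only [Pi.sub_apply, Pi.zero_apply]; ring

/-- Smoothing estimates for `𝕀_θ` and `𝕀_θ - ℒ`. -/
lemma lin_all {r T ν α : ℝ} (hν : 0 < ν) (hT : 0 < T) (hr : 3 / 2 ≤ r) (hα : |α| ≤ r)
    (hα1 : |α + 1| ≤ r) {u : ℝ → Coef} {M : ENNReal}
    (hM : M ≠ ⊤) (HM : ∀ t ∈ Icc (0 : ℝ) T, eH r (u t) ≤ M) :
    ∃ C : ENNReal, C ≠ ⊤ ∧ ∀ U : ℝ → Coef, Par ν T U (linG u U) →
      ∫⁻ t in Ioc 0 T, eH α (U t) ≠ ⊤ →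
      ∫⁻ t in Ioc 0 T, eH (α + 1) (U t) ≤ C * eH α (U 0) ∧
      ∫⁻ t in Ioc 0 T, eH (α + 2) (U t - heatS ν t (U 0)) ≤ C * eH α (U 0) := by
  obtain ⟨C, hC, HC⟩ := lin_est hν hT hr hα hM HM
  obtain ⟨Q, hQ, HQ⟩ := linG_bound hr hα1 hM HM
  refine ⟨C + ENNReal.ofReal (1 / ν) * (ENNReal.ofReal (1 / ν) * (Q * C)), by finiteness, ?_⟩
  intro U hU hfin
  have h1 := HC U hU hfin
  refine ⟨h1.trans (by gcongr; exact le_self_add), ?_⟩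
  have h2 := (W_par (U 0) hU).est_int hν hT.le (α + 1)
  have e0 : eH (α + 1) (U 0 - heatS ν 0 (U 0)) = 0 := by rw [heatS_zero, sub_self, eH_zero]
  simp only [e0, zero_add] at h2
  rw [add_assoc, one_add_one_eq_two] at h2
  have hG : ∫⁻ t in Ioc 0 T, eH (α + 1 - 1) (linG u U t) ≤ Q * (C * eH α (U 0)) := by
    refine (setLIntegral_mono' measurableSet_Ioc (HQ U)).trans ?_
    rw [lintegral_const_mul' _ _ hQ]
    gcongr
  calc _ ≤ _ := ofReal_inv_mul hν h2
    _ ≤ ENNReal.ofReal (1 / ν) * (ENNReal.ofReal (1 / ν) * (Q * (C * eH α (U 0)))) := by gcongr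
    _ = ENNReal.ofReal (1 / ν) * (ENNReal.ofReal (1 / ν) * (Q * C)) * eH α (U 0) := by ring
    _ ≤ _ := by gcongr; exact le_add_self

/-! ### Duality -/

lemma innerC_le (β : ℝ) (c d : Coef) : ‖innerC c d‖ₑ ^ 2 ≤ eH β c * eH (-β) d := by
  have h := tsum_cs (fun k => ENNReal.ofReal (lam k ^ (β / 2)) * ‖c k‖ₑ)
    (fun k => ENNReal.ofReal (lam k ^ (-β / 2)) * ‖d k‖ₑ)
  simp_rw [mul_pow, wz_half_sq] at h
  refine le_trans ?_ h
  gcongr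
  refine enorm_tsum_le_tsum_enorm.trans (ENNReal.tsum_le_tsum fun k => le_of_eq ?_)
  have e : ENNReal.ofReal (lam k ^ (β / 2)) * ENNReal.ofReal (lam k ^ (-β / 2)) = 1 := by
    rw [← ofReal_lam_add]; ring_nf; simp
  calc _ = 1 * (‖c k‖ₑ * ‖d k‖ₑ) := by
        rw [enorm_mul, one_mul]; congr 1
        rw [← ofReal_norm, ← ofReal_norm, RCLike.norm_conj]
    _ = _ := by rw [← e]; ring

lemma le_sqrt_mul {x A B : ENNReal} (h : x ^ 2 ≤ A * B) :
    x ≤ A ^ (1 / 2 : ℝ) * B ^ (1 / 2 : ℝ) := by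
  rw [← ENNReal.mul_rpow_of_nonneg _ _ (by norm_num)]
  calc x = (x ^ 2) ^ (1 / 2 : ℝ) := by
        rw [← ENNReal.rpow_natCast, ← ENNReal.rpow_mul]; norm_num
    _ ≤ _ := by gcongr

lemma rpow_half_sq (A : ENNReal) : (A ^ (1 / 2 : ℝ)) ^ 2 = A := by
  rw [← ENNReal.rpow_natCast, ← ENNReal.rpow_mul]; norm_num

lemma dual_integral {T : ℝ} (hT : 0 ≤ T) {φ ψ : ℝ → ℂ} {A B A' B' : ℝ → ENNReal}
    (hA : AEMeasurable A (volume.restrict (Ioc 0 T)))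
    (hB : AEMeasurable B (volume.restrict (Ioc 0 T)))
    (hA' : AEMeasurable A' (volume.restrict (Ioc 0 T)))
    (hB' : AEMeasurable B' (volume.restrict (Ioc 0 T)))
    (h : ∀ t, ‖φ t‖ₑ ^ 2 ≤ A t * B t) (h' : ∀ t, ‖ψ t‖ₑ ^ 2 ≤ A' t * B' t) :
    ‖∫ t in (0 : ℝ)..T, (φ t + ψ t)‖ₑ ^ 2 ≤
      4 * ((∫⁻ t in Ioc 0 T, A t) * (∫⁻ t in Ioc 0 T, B t) +
        (∫⁻ t in Ioc 0 T, A' t) * (∫⁻ t in Ioc 0 T, B' t)) := by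
  have hm : AEMeasurable (fun t => A t ^ (1 / 2 : ℝ) * B t ^ (1 / 2 : ℝ))
      (volume.restrict (Ioc 0 T)) := (hA.pow_const _).mul (hB.pow_const _)
  have h1 : ‖∫ t in (0 : ℝ)..T, (φ t + ψ t)‖ₑ ≤
      (∫⁻ t in Ioc 0 T, A t ^ (1 / 2 : ℝ) * B t ^ (1 / 2 : ℝ)) +
      ∫⁻ t in Ioc 0 T, A' t ^ (1 / 2 : ℝ) * B' t ^ (1 / 2 : ℝ) := by
    rw [intervalIntegral.integral_of_le hT, ← lintegral_add_left' hm]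
    refine (enorm_integral_le_lintegral_enorm _).trans (lintegral_mono fun t => ?_)
    refine (enorm_add_le _ _).trans ?_
    gcongr
    · exact le_sqrt_mul (h t)
    · exact le_sqrt_mul (h' t)
  calc _ ≤ _ := pow_le_pow_left' h1 2
    _ ≤ _ := ennreal_add_sq_le _ _
    _ ≤ _ := by
      have q1 := lintegral_cs _ (hA.pow_const (1 / 2 : ℝ)) (hB.pow_const (1 / 2 : ℝ))
      have q2 := lintegral_cs _ (hA'.pow_const (1 / 2 : ℝ)) (hB'.pow_const (1 / 2 : ℝ))
      simp only [rpow_half_sq] at q1 q2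
      gcongr

lemma fneg_fneg (k : Freq) : fneg (fneg k) = k := Subtype.ext (neg_neg _)

lemma fneg_ne (k : Freq) : fneg k ≠ k := by
  intro h
  have h1 : -k.1 = k.1 := congrArg Subtype.val h
  apply k.2
  have e1 := congrArg Prod.fst h1
  have e2 := congrArg Prod.snd h1
  simp only [Prod.fst_neg, Prod.snd_neg] at e1 e2
  exact Prod.ext (by simp; omega) (by simp; omega)

def fnegE : Freq ≃ Freq := ⟨fneg, fneg, fneg_fneg, fneg_fneg⟩

lemma lam_fneg (k : Freq) : lam (fneg k) = lam k := by
  rw [lam_eq, lam_eq]; exact lamZ_neg k.1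

lemma innerC_conj {c d : Coef} (hc : IsReal c) (hd : IsReal d) :
    (starRingEnd ℂ) (innerC c d) = innerC c d := by
  unfold innerC
  rw [Complex.conj_tsum, ← fnegE.tsum_eq]
  refine tsum_congr fun k => ?_
  change (starRingEnd ℂ) (c (fneg k) * (starRingEnd ℂ) (d (fneg k))) = _
  rw [hc k, hd k]
  simp

lemma heatS_real {ν t : ℝ} {c : Coef} (hc : IsReal c) : IsReal (heatS ν t c) := by
  intro k
  simp only [heatS, lam_fneg, hc k, map_mul, Complex.conj_ofReal]
  ring

lemma IsReal.sub {c d : Coef} (hc : IsReal c) (hd : IsReal d) : IsReal (c - d) := by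
  intro k
  simp only [Pi.sub_apply, hc k, hd k, map_sub]; ring

lemma memHinf_of_finite {g : Coef} (hg : IsReal g) (h : (Function.support g).Finite) :
    MemHinf g := by
  intro α
  refine ⟨hg, summable_of_finite_support (h.subset ?_)⟩
  intro k hk hk0
  apply hk
  simp [hk0]

open Classical in
def tst (k₀ : Freq) (z : ℂ) : Coef := fun k =>
  if k = k₀ then z else if k = fneg k₀ then -(starRingEnd ℂ) z else 0

lemma tst_memHinf (k₀ : Freq) (z : ℂ) : MemHinf (tst k₀ z) := by
  classical
  apply memHinf_of_finite
  · intro k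
    unfold tst
    by_cases h1 : k = k₀
    · subst h1
      simp [fneg_ne]
    · by_cases h2 : k = fneg k₀
      · subst h2
        simp [fneg_ne, fneg_fneg]
      · have h3 : fneg k ≠ k₀ := fun h => h2 (by rw [← h, fneg_fneg])
        have h4 : fneg k ≠ fneg k₀ := fun h => h1 (by rw [← fneg_fneg k, h, fneg_fneg])
        simp [h1, h2, h3, h4]
  · refine Set.Finite.subset (Set.toFinite {k₀, fneg k₀}) fun k hk => ?_
    by_contra h
    simp only [mem_insert_iff, mem_singleton_iff, not_or] at h
    exact hk (by simp [tst, h.1, h.2])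

lemma innerC_tst (x : Coef) (k₀ : Freq) (z : ℂ) :
    innerC x (tst k₀ z) = x k₀ * (starRingEnd ℂ) z - x (fneg k₀) * z := by
  classical
  unfold innerC
  rw [tsum_eq_sum (s := {k₀, fneg k₀}), Finset.sum_pair (fneg_ne k₀).symm]
  · simp [tst, fneg_ne]; ring
  · intro k hk
    simp only [Finset.mem_insert, Finset.mem_singleton, not_or] at hk
    simp [tst, hk.1, hk.2]

lemma isReal_of_test {x : Coef}
    (h : ∀ g, MemHinf g → (starRingEnd ℂ) (innerC x g) = innerC x g) : IsReal x := by
  intro k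
  have h1 := h _ (tst_memHinf k 1)
  have h2 := h _ (tst_memHinf k Complex.I)
  rw [innerC_tst] at h1 h2
  have e1 := congrArg Complex.im h1
  have e2 := congrArg Complex.im h2
  simp at e1 e2
  apply Complex.ext
  · simp; linarith
  · simp; linarith

lemma dual_norm (s : ℝ) {x : Coef} (hx : IsReal x) {D : ENNReal}
    (h : ∀ g, MemHinf g → ‖innerC x g‖ₑ ^ 2 ≤ D * eH (-s) g) : eH s x ≤ D := by
  classical
  unfold eH
  rw [ENNReal.tsum_eq_iSup_sum]
  refine iSup_le fun F₀ => ?_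
  set F := F₀ ∪ F₀.image fneg with hF
  have hsub : F₀ ⊆ F := Finset.subset_union_left
  have hsym : ∀ k, fneg k ∈ F ↔ k ∈ F := by
    have h1 : ∀ k, k ∈ F → fneg k ∈ F := by
      intro k hk
      rw [hF, Finset.mem_union, Finset.mem_image] at hk ⊢
      rcases hk with hk | ⟨j, hj, rfl⟩
      · exact Or.inr ⟨k, hk, rfl⟩
      · rw [fneg_fneg]; exact Or.inl hj
    intro k
    exact ⟨fun hk => by have := h1 _ hk; rwa [fneg_fneg] at this, h1 k⟩
  refine (Finset.sum_le_sum_of_subset hsub).trans ?_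
  set g : Coef := fun k => if k ∈ F then ((lam k ^ s : ℝ) : ℂ) * x k else 0 with hg
  have hgH : MemHinf g := by
    apply memHinf_of_finite
    · intro k
      simp only [hg, hsym, lam_fneg, hx k]
      split_ifs
      · rw [map_mul, Complex.conj_ofReal]; ring
      · simp
    · refine F.finite_toSet.subset fun k hk => ?_
      by_contra hkF
      exact hk (by simp only [hg]; rw [if_neg (by simpa using hkF)])
  set S : ℝ := ∑ k ∈ F, lam k ^ s * ‖x k‖ ^ 2 with hS
  have hS0 : 0 ≤ S := Finset.sum_nonneg fun k _ => term_nonneg s x k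
  have e1 : innerC x g = (S : ℂ) := by
    unfold innerC
    rw [tsum_eq_sum (s := F), hS]
    · push_cast
      refine Finset.sum_congr rfl fun k hk => ?_
      simp only [hg, if_pos hk, map_mul, Complex.conj_ofReal]
      have := Complex.mul_conj' (x k)
      calc _ = ((lam k ^ s : ℝ) : ℂ) * (x k * (starRingEnd ℂ) (x k)) := by ring
        _ = _ := by rw [this]
    · intro k hk
      simp [hg, hk]
  have e2 : eH (-s) g = ENNReal.ofReal S := by
    unfold eH
    rw [tsum_eq_sum (s := F), hS, ENNReal.ofReal_sum_of_nonneg fun k _ => term_nonneg s x k]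
    · refine Finset.sum_congr rfl fun k hk => ?_
      have hl := lam_pos k
      rw [eH_term]
      congr 1
      simp only [hg, if_pos hk, norm_mul, Complex.norm_real]
      rw [Real.norm_of_nonneg (by positivity), Real.rpow_neg hl.le]
      have : 0 < lam k ^ s := by positivity
      field_simp
    · intro k hk
      simp [hg, hk]
  have e3 : ∑ k ∈ F, ENNReal.ofReal (lam k ^ s) * ‖x k‖ₑ ^ 2 = ENNReal.ofReal S := by
    rw [hS, ENNReal.ofReal_sum_of_nonneg fun k _ => term_nonneg s x k]
    exact Finset.sum_congr rfl fun k _ => eH_term s x k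
  rw [e3]
  have h1 := h g hgH
  rw [e1, e2, enorm_sq_eq, Complex.norm_real, Real.norm_of_nonneg hS0,
    ENNReal.ofReal_pow hS0, sq] at h1
  by_cases h0 : ENNReal.ofReal S = 0
  · rw [h0]; exact zero_le
  · exact (ENNReal.mul_le_mul_iff_left h0 ENNReal.ofReal_ne_top).mp h1

/-! ### Compactness -/

lemma finite_lam_lt {Λ : ℝ} (hΛ : 0 < Λ) : {k : Freq | lam k ≤ Λ}.Finite := by
  have h := summable_wz (r := 3 / 2) le_rfl
  rw [← tsum_freq _ (by simp [wz])] at h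
  refine (ENNReal.finite_const_le_of_tsum_ne_top h
    (ε := ENNReal.ofReal (Λ ^ (-(3 / 2) / 2 : ℝ)) ^ 2) ?_).subset ?_
  · have : 0 < Λ ^ (-(3 / 2) / 2 : ℝ) := Real.rpow_pos_of_pos hΛ _
    simpa using this
  · intro k hk
    simp only [mem_setOf_eq] at hk ⊢
    rw [wz_ne k.2]
    gcongr ?_ ^ 2
    apply ENNReal.ofReal_le_ofReal
    exact Real.rpow_le_rpow_of_nonpos (lam_pos k) hk (by norm_num)

lemma hN_lt {β ε : ℝ} (hε : 0 < ε) {c : Coef} (h : eH β c < ENNReal.ofReal (ε ^ 2)) :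
    hN β c < ε := by
  have hf : FinH β c := finH_iff.mpr (ne_top_of_lt h)
  rw [hf.eH_eq, ENNReal.ofReal_lt_ofReal_iff (by positivity)] at h
  rw [hN, Real.sqrt_lt' hε]
  exact h

lemma tsum_ite_aux [DecidableEq Freq] (F : Finset Freq) (β η : ℝ) :
    ∑' k, (if k ∈ F then ENNReal.ofReal (lam k ^ β * η ^ 2) else 0) =
      ENNReal.ofReal ((∑ k ∈ F, lam k ^ β) * η ^ 2) := by
  rw [tsum_eq_sum (s := F) (fun k hk => if_neg hk), Finset.sum_mul,
    ENNReal.ofReal_sum_of_nonneg fun k _ =>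
      mul_nonneg (Real.rpow_pos_of_pos (lam_pos k) β).le (sq_nonneg η)]
  exact Finset.sum_congr rfl fun k hk => if_pos hk

lemma num_aux {d ε Λ A η : ℝ} (hε : 0 < ε) (hd0 : 0 ≤ d) (hA0 : 0 ≤ A)
    (hΛ : Λ = 4 * (d + 1) / ε ^ 2) (hη2 : η ^ 2 = ε ^ 2 / (4 * (A + 1))) :
    1 / Λ * d + A * η ^ 2 < ε ^ 2 := by
  have q1 : 1 / Λ * d ≤ ε ^ 2 / 4 := by
    rw [hΛ, one_div_div, div_mul_eq_mul_div, div_le_div_iff₀ (by positivity) (by norm_num)]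
    nlinarith [sq_nonneg ε]
  have q2 : A * η ^ 2 ≤ ε ^ 2 / 4 := by
    rw [hη2, mul_div_assoc', div_le_div_iff₀ (by positivity) (by norm_num)]
    nlinarith [sq_nonneg ε]
  have : 0 < ε ^ 2 := by positivity
  linarith

set_option maxHeartbeats 1000000 in
lemma compact_embed (β : ℝ) {D : ENNReal} (hD : D ≠ ⊤) {ε : ℝ} (hε : 0 < ε) :
    ∃ S : Finset Coef, ∀ x : Coef, eH (β + 1) x ≤ D → ∃ s ∈ S, hN β (x - s) < ε := by
  classical
  set d := D.toReal with hd
  have hd0 : 0 ≤ d := ENNReal.toReal_nonneg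
  have hDd : D = ENNReal.ofReal d := (ENNReal.ofReal_toReal hD).symm
  set Λ : ℝ := 4 * (d + 1) / ε ^ 2 with hΛ
  have hΛ0 : 0 < Λ := by positivity
  set F := (finite_lam_lt hΛ0).toFinset with hF
  have hmem : ∀ k, k ∈ F ↔ lam k ≤ Λ := by intro k; simp [hF]
  set A : ℝ := ∑ k ∈ F, lam k ^ β with hA
  have hlp : ∀ (k : Freq) (γ : ℝ), 0 < lam k ^ γ := fun k γ => Real.rpow_pos_of_pos (lam_pos k) γ
  have hA0 : 0 ≤ A := Finset.sum_nonneg fun k _ => (hlp k β).le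
  set η : ℝ := √(ε ^ 2 / (4 * (A + 1))) with hη
  have hη0 : 0 < η := Real.sqrt_pos.mpr (by positivity)
  have hη2 : η ^ 2 = ε ^ 2 / (4 * (A + 1)) := Real.sq_sqrt (by positivity)
  -- radius bound for the head
  set R : ℝ := ∑ k ∈ F, √(d / lam k ^ (β + 1)) with hR
  have hbd : ∀ x : Coef, eH (β + 1) x ≤ D → (fun k : F => x k) ∈ Metric.closedBall (0 : F → ℂ) R := by
    intro x hx
    rw [mem_closedBall_zero_iff, pi_norm_le_iff_of_nonneg
      (Finset.sum_nonneg fun k _ => Real.sqrt_nonneg _)]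
    intro k
    refine le_trans ?_ (Finset.single_le_sum (f := fun k => √(d / lam k ^ (β + 1)))
      (fun k _ => Real.sqrt_nonneg _) k.2)
    apply Real.le_sqrt_of_sq_le
    rw [le_div_iff₀ (hlp _ _)]
    have h1 : ENNReal.ofReal (lam k.1 ^ (β + 1) * ‖x k.1‖ ^ 2) ≤ ENNReal.ofReal d := by
      rw [← eH_term, ← hDd]
      exact (ENNReal.le_tsum k.1).trans hx
    rw [ENNReal.ofReal_le_ofReal_iff hd0] at h1
    linarith
  have htb : TotallyBounded (Metric.closedBall (0 : F → ℂ) R) :=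
    (isCompact_closedBall _ _).totallyBounded
  obtain ⟨t, htf, ht⟩ := Metric.totallyBounded_iff.mp htb η hη0
  let E : (F → ℂ) → Coef := fun v k => if h : k ∈ F then v ⟨k, h⟩ else 0
  refine ⟨htf.toFinset.image E, fun x hx => ?_⟩
  obtain ⟨v, hv, hxv⟩ := mem_iUnion₂.mp (ht (hbd x hx))
  refine ⟨E v, Finset.mem_image_of_mem _ (htf.mem_toFinset.mpr hv), ?_⟩
  apply hN_lt hε
  have hterm : ∀ k, ENNReal.ofReal (lam k ^ β) * ‖(x - E v) k‖ₑ ^ 2 ≤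
      ENNReal.ofReal (1 / Λ) * (ENNReal.ofReal (lam k ^ (β + 1)) * ‖x k‖ₑ ^ 2) +
      (if k ∈ F then ENNReal.ofReal (lam k ^ β * η ^ 2) else 0) := by
    intro k
    by_cases hk : k ∈ F
    · rw [if_pos hk, eH_term]
      refine le_trans ?_ le_add_self
      apply ENNReal.ofReal_le_ofReal
      have : ‖(x - E v) k‖ ≤ η := by
        rw [mem_ball_iff_norm] at hxv
        have h2 := (norm_le_pi_norm ((fun k : F => x k) - v) ⟨k, hk⟩).trans hxv.le
        simpa [E, hk] using h2
      have := hlp k β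
      gcongr
    · rw [if_neg hk, add_zero]
      have hl : Λ < lam k := by
        rw [hmem] at hk; exact not_le.mp hk
      have e : (x - E v) k = x k := by simp [E, hk]
      rw [e, ← mul_assoc]
      gcongr
      rw [← ENNReal.ofReal_mul (by positivity)]
      apply ENNReal.ofReal_le_ofReal
      rw [Real.rpow_add_one (lam_pos k).ne']
      have := hlp k β
      rw [one_div, inv_mul_eq_div, le_div_iff₀ hΛ0]
      gcongr
  have hsum : ∑' k, (if k ∈ F then ENNReal.ofReal (lam k ^ β * η ^ 2) else 0) =
      ENNReal.ofReal (A * η ^ 2) := by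
    rw [hA]; exact tsum_ite_aux F β η
  calc eH β (x - E v) ≤ _ := ENNReal.tsum_le_tsum hterm
    _ = ENNReal.ofReal (1 / Λ) * eH (β + 1) x + ENNReal.ofReal (A * η ^ 2) := by
        rw [ENNReal.tsum_add, ENNReal.tsum_mul_left, hsum, eH]
    _ ≤ ENNReal.ofReal (1 / Λ) * ENNReal.ofReal d + ENNReal.ofReal (A * η ^ 2) := by
        gcongr; rw [← hDd]; exact hx
    _ = ENNReal.ofReal (1 / Λ * d + A * η ^ 2) := by
        rw [← ENNReal.ofReal_mul (one_div_pos.mpr hΛ0).le, ← ENNReal.ofReal_add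
          (mul_nonneg (one_div_pos.mpr hΛ0).le hd0) (mul_nonneg hA0 (sq_nonneg η))]
    _ < ENNReal.ofReal (ε ^ 2) := by
        rw [ENNReal.ofReal_lt_ofReal_iff (pow_pos hε 2)]
        exact num_aux hε hd0 hA0 hΛ hη2

/-- Lemma `PropCompactPerturbation`. For `a ∈ ℤ` and
`b = max{a+4, |a|+1}`, if `θ ∈ Ḣ^b_⋄` and `f ∈ Ḣ^{b−1}_⋄`, then the operator
`𝒦 = 𝕀_θ*(𝕀_θ − ℒ) + (𝕀_θ − ℒ)*ℒ` (so that `𝕀_θ*𝕀_θ = ℒ*ℒ + 𝒦`),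
characterised on test fields by
`⟨𝒦ξ, g⟩_{L²} = ∫₀ᵀ [⟨(𝕀_θ−ℒ)ξ(t), 𝕀_θ g(t)⟩ + ⟨S_t ξ, (𝕀_θ−ℒ)g(t)⟩] dt`,
maps `Ḣ^a_⋄` continuously into `Ḣ^{a+3}_⋄`, and defines a compact operator
from `Ḣ^a_⋄` to `Ḣ^{a+2}_⋄` (the image of the `Ḣ^a`-unit ball is totally
bounded in `Ḣ^{a+2}`). -/
theorem statement17 (a : ℤ) (T ν : ℝ) (hT : 0 < T) (hν : 0 < ν)
    (θ f : Coef)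
    (hθ : MemH ((max (a + 4) (|a| + 1) : ℤ) : ℝ) θ)
    (hf : MemH (((max (a + 4) (|a| + 1) : ℤ) : ℝ) - 1) f)
    (uθ : ℝ → Coef) (huθ : IsNSSol ν f T θ uθ)
    (I : Coef → ℝ → Coef)
    (hI : ∀ ξ, MemHinf ξ →
      IsLinSol ν uθ T ξ (I ξ) ∧ ContH 0 T (I ξ) ∧ MemL2H 1 T (I ξ))
    (K : Coef → Coef) (hKlin : IsLinMap K)
    (hK : ∀ ξ g, MemHinf ξ → MemHinf g →
      innerC (K ξ) g = ∫ t in (0:ℝ)..T,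
        (innerC (I ξ t - heatS ν t ξ) (I g t) +
          innerC (heatS ν t ξ) (I g t - heatS ν t g))) :
    (∃ C : ℝ, 0 < C ∧ ∀ ξ, MemHinf ξ →
      MemH ((a : ℝ) + 3) (K ξ) ∧ hN ((a : ℝ) + 3) (K ξ) ≤ C * hN (a : ℝ) ξ) ∧
    (∀ ε : ℝ, 0 < ε → ∃ S : Finset Coef, ∀ ξ, MemHinf ξ → hN (a : ℝ) ξ ≤ 1 →
      ∃ s ∈ S, hN ((a : ℝ) + 2) (K ξ - s) < ε) := by
  set b : ℤ := max (a + 4) (|a| + 1) with hb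
  have hb3 : 3 ≤ b ∧ |a| ≤ b ∧ |a + 1| ≤ b ∧ |-a - 3| ≤ b ∧ |-a - 3 + 1| ≤ b := by
    have h1 : a + 4 ≤ b := le_max_left _ _
    have h2 : |a| + 1 ≤ b := le_max_right _ _
    have h3 := le_abs_self a
    have h4 := neg_abs_le a
    refine ⟨by omega, by omega, abs_le.mpr ⟨by omega, by omega⟩, abs_le.mpr ⟨by omega, by omega⟩,
      abs_le.mpr ⟨by omega, by omega⟩⟩
  obtain ⟨hb3, ha0, ha1, ha2, ha3⟩ := hb3
  have hb3' : (3 : ℝ) ≤ b := by exact_mod_cast hb3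
  have ha0' : |(a : ℝ)| ≤ b := by exact_mod_cast ha0
  have ha1' : |(a : ℝ) + 1| ≤ b := by exact_mod_cast ha1
  have ha2' : |-(a : ℝ) - 3| ≤ b := by exact_mod_cast ha2
  have ha3' : |-(a : ℝ) - 3 + 1| ≤ b := by exact_mod_cast ha3
  obtain ⟨N, hN⟩ : ∃ N : ℕ, (b : ℝ) = 1 + (N : ℝ) := by
    refine ⟨(b - 1).toNat, ?_⟩
    have : (((b - 1).toNat : ℤ) : ℝ) = ((b - 1 : ℤ) : ℝ) := by
      rw [Int.toNat_of_nonneg (by omega)]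
    rw [Int.cast_natCast] at this
    rw [this]; push_cast; ring
  obtain ⟨⟨M, hM, HM⟩, -⟩ := ns_regular hν hT (by linarith) hθ hf huθ (2 * N)
    (by rw [hN]; push_cast; linarith)
  have eN : (1 : ℝ) + ((2 * N : ℕ) : ℝ) / 2 = b := by rw [hN]; push_cast; ring
  rw [eN] at HM
  have hr : (3 / 2 : ℝ) ≤ b := by linarith
  -- properties of the linearised flow
  have hpar : ∀ ξ, MemHinf ξ → Par ν T (I ξ) (linG uθ (I ξ)) := by
    intro ξ hξ
    obtain ⟨hs, hc, hl⟩ := hI ξ hξ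
    have hfin : ∀ t ∈ Icc (0 : ℝ) T, FinH 0 (I ξ t) := by
      intro t ht
      rcases ht.1.eq_or_lt with h0 | h0
      · rw [← h0, hs.init]; exact (hξ 0).2
      · exact (hl.1 t ⟨h0, ht.2⟩).2.anti zero_le_one
    refine ⟨hc.coord le_rfl hfin, fun k t ht => ?_⟩
    refine (hs.deriv k t ht).congr_deriv ?_
    simp only [linG, Pi.sub_apply, Pi.neg_apply, Pi.zero_apply]
    ring
  have hfinb : ∀ ξ, MemHinf ξ → ∀ α : ℝ, α ≤ b → ∫⁻ t in Ioc 0 T, eH α (I ξ t) ≠ ⊤ := by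
    intro ξ hξ α hα
    obtain ⟨hs, hc, hl⟩ := hI ξ hξ
    have h := lin_fin hν hT hr hM HM (hpar ξ hξ)
      (fun β => by rw [hs.init]; exact finH_iff.mp (hξ β).2) hl.lint N hN.ge
    rw [← hN] at h
    exact ne_top_of_le_ne_top h (lintegral_mono fun t => eH_mono hα _)
  obtain ⟨C₁, hC₁, H₁⟩ := lin_all hν hT hr ha0' ha1' hM HM
  obtain ⟨C₂, hC₂, H₂⟩ := lin_all hν hT hr ha2' ha3' hM HM
  set Q : ENNReal := 4 * (C₁ * C₂ + ENNReal.ofReal (1 / ν) * C₂) with hQ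
  have hQt : Q ≠ ⊤ := by finiteness
  have hreal : ∀ ξ, MemHinf ξ → IsReal (K ξ) := by
    intro ξ hξ
    refine isReal_of_test fun g hg => ?_
    rw [hK ξ g hξ hg, intervalIntegral.integral_of_le hT.le, ← integral_conj]
    refine setIntegral_congr_fun measurableSet_Ioc fun t ht => ?_
    have r1 := (hI ξ hξ).1.real t ⟨ht.1.le, ht.2⟩
    have r2 := (hI g hg).1.real t ⟨ht.1.le, ht.2⟩
    have r3 : IsReal (heatS ν t ξ) := heatS_real (hξ 0).1
    have r4 : IsReal (heatS ν t g) := heatS_real (hg 0).1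
    simp only [map_add]
    rw [innerC_conj (r1.sub r3) r2, innerC_conj r3 (r2.sub r4)]
  have hbound : ∀ ξ, MemHinf ξ → eH ((a : ℝ) + 3) (K ξ) ≤ Q * eH a ξ := by
    intro ξ hξ
    refine dual_norm _ (hreal ξ hξ) fun g hg => ?_
    rw [hK ξ g hξ hg]
    have pξ := hpar ξ hξ
    have pg := hpar g hg
    have iξ : I ξ 0 = ξ := (hI ξ hξ).1.init
    have ig : I g 0 = g := (hI g hg).1.init
    have b1 := (H₁ (I ξ) pξ (hfinb ξ hξ _ ((le_abs_self _).trans ha0'))).2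
    obtain ⟨b2, b4⟩ := H₂ (I g) pg (hfinb g hg _ ((le_abs_self _).trans ha2'))
    have b3 := heat_est hν hT (a : ℝ) ξ
    rw [iξ] at b1
    rw [ig] at b2 b4
    rw [show -(a : ℝ) - 3 + 1 = -((a : ℝ) + 2) by ring,
      show -(a : ℝ) - 3 = -((a : ℝ) + 3) by ring] at b2
    rw [show -(a : ℝ) - 3 + 2 = -((a : ℝ) + 1) by ring,
      show -(a : ℝ) - 3 = -((a : ℝ) + 3) by ring] at b4
    refine (dual_integral hT.le
      (aem_eH (aem_U (W_par ξ pξ).cont) ((a : ℝ) + 2)) (aem_eH (aem_U pg.cont) (-((a : ℝ) + 2)))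
      (aem_eH (aem_U (heat_par ν T ξ).cont) ((a : ℝ) + 1))
      (aem_eH (aem_U (W_par g pg).cont) (-((a : ℝ) + 1)))
      (fun t => innerC_le _ _ _) (fun t => innerC_le _ _ _)).trans ?_
    calc _ ≤ 4 * ((C₁ * eH a ξ) * (C₂ * eH (-((a : ℝ) + 3)) g) +
          (ENNReal.ofReal (1 / ν) * eH a ξ) * (C₂ * eH (-((a : ℝ) + 3)) g)) := by gcongr
      _ = _ := by rw [hQ]; ring
  constructor
  · refine ⟨√Q.toReal + 1, by positivity, fun ξ hξ => ?_⟩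
    have hb' := hbound ξ hξ
    have hξa := (hξ a).2
    have hfin : FinH ((a : ℝ) + 3) (K ξ) := by
      rw [finH_iff]
      have := finH_iff.mp hξa
      exact ne_top_of_le_ne_top (by finiteness) hb'
    refine ⟨⟨hreal ξ hξ, hfin⟩, ?_⟩
    rw [hfin.eH_eq, hξa.eH_eq, ← ENNReal.ofReal_toReal hQt,
      ← ENNReal.ofReal_mul ENNReal.toReal_nonneg, ENNReal.ofReal_le_ofReal_iff
      (mul_nonneg ENNReal.toReal_nonneg (hSq_nonneg _ _))] at hb'
    have h1 : NS2D.hN ((a : ℝ) + 3) (K ξ) ≤ √Q.toReal * NS2D.hN a ξ := by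
      unfold NS2D.hN
      rw [← Real.sqrt_mul ENNReal.toReal_nonneg]
      exact Real.sqrt_le_sqrt hb'
    have h2 : 0 ≤ NS2D.hN a ξ := Real.sqrt_nonneg _
    linarith
  · intro ε hε
    obtain ⟨S, hS⟩ := compact_embed ((a : ℝ) + 2) hQt hε
    refine ⟨S, fun ξ hξ h1 => hS _ ?_⟩
    rw [add_assoc, show (2 : ℝ) + 1 = 3 by norm_num]
    refine (hbound ξ hξ).trans ?_
    have : eH a ξ ≤ 1 := by
      rw [← hN_sq (hξ a).2]
      calc _ ≤ ENNReal.ofReal 1 ^ 2 := by gcongr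
        _ = 1 := by simp
    calc _ ≤ Q * 1 := by gcongr
      _ = Q := mul_one Q

end NS2D
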